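/- Let g ∈ H^∞. For every p > 0, the closure of the algebra ℂ[B,g] in H^p contains the z-invariant subspace Γ(g)·H^p = {Γ(g)·h : h ∈ H^p}. -/

import Mathlib

/-!
The idea is that `H^∞` is a free module of rank `n` over `{c ∘ B : c ∈ H^∞}` with basis
`1, z, …, z^{n-1}` (only the existence of coordinates is used, `hinf_decomp`). Let `M(b)` be the matrix,
in this basis, of multiplication by `g` on the functions on the fibre `B⁻¹(b)`, and let `c(b)` be the
coordinates of `h ∈ H^∞`. Conjugation with the Vandermonde matrix of the fibre diagonalises `M(b)`, with
eigenvalues the values of `g` on the fibre, and a computation with adjugates (`adjugate_identity`) shows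
that, with `b = B(z)`, the last entry of `adj(g(z) - M(b)) c(b)` is `Γ(g)(z) h(z)` when
the fibre has `n` distinct points, hence everywhere by the identity theorem. Therefore `Γ(g) h` is a
polynomial in `g` and in finitely many functions `c ∘ B` with `c ∈ H^∞` (`gamma_good`).

A function `c ∘ B` is a limit, in quadratic mean and with a uniform bound, of polynomials in `B`:
approximate `c` by polynomials and apply Littlewood subordination, `B(0) = 0` (`hinf_approx`). The functions
that are limits of `ℂ[B,g]` in this sense form an algebra (`goodAlg`), which hence contains
`Γ(g) · H^∞`; in particular `Γ(g)` is bounded. For bounded functions, convergence in quadratic mean implies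
convergence in `p`-th mean (`two_to_p`), and `H^∞` is dense in `H^p` (`hinf_dense`), which gives
`Γ(g) · H^p`.

Density of `H^∞` in `H^p` is proved without boundary values: `|f|^{p/2} ≤ Re W` for some `W ∈ H²`
(`exists_majorant`), and `f · (k/(k+W))^N` is bounded and close to `f`. The bounds on the coordinates
come from Lagrange interpolation on the fibres: near the unit circle the fibres are uniformly separated,
because `B'` does not vanish on the circle (`fibDer_ne`).
-/

open Complex Polynomial MeasureTheory Metric Set Filter Topology
open scoped Classical

noncomputable section

/-- The open unit disk in `ℂ`. -/
def uDisk : Set ℂ := Metric.ball 0 1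

/-- The closed unit disk in `ℂ`. -/
def cDisk : Set ℂ := Metric.closedBall 0 1

/-- The finite Blaschke product with zero set `a 0, …, a (n-1)`:
`B(z) = ∏_j (a_j - z)/(1 - conj(a_j)·z)`. -/
def blaschke {n : ℕ} (a : Fin n → ℂ) (z : ℂ) : ℂ :=
  ∏ j, (a j - z) / (1 - (starRingEnd ℂ) (a j) * z)

/-- The multiset of the `n` solutions (with multiplicity) `φ_0(z) = z, φ_1(z), …, φ_{n-1}(z)`
of `B(w) = B(z)`, realized as the roots of the polynomial equation
`∏_j (a_j - w) = B(z) · ∏_j (1 - conj(a_j)·w)`. -/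
def fiberMS {n : ℕ} (a : Fin n → ℂ) (z : ℂ) : Multiset ℂ :=
  ((∏ j, (Polynomial.C (a j) - Polynomial.X)) -
    Polynomial.C (blaschke a z) *
      ∏ j, (1 - Polynomial.C ((starRingEnd ℂ) (a j)) * Polynomial.X)).roots

/-- `𝒟(f)(z) = ∏_{j=1}^{n-1} (f(z) - f(φ_j(z)))`, where `φ_1(z), …, φ_{n-1}(z)` is the
fiber of `B` over `B(z)` with one copy of `z` removed.  In particular
`calD a id z = ∏_{j=1}^{n-1} (z - φ_j(z))`. -/
def calD {n : ℕ} (a : Fin n → ℂ) (f : ℂ → ℂ) (z : ℂ) : ℂ :=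
  (((fiberMS a z).erase z).map (fun w => f z - f w)).prod

/-- `G` is (the holomorphic extension after removing singularities of) `Γ(f) = 𝒟(f)/𝒟`. -/
def IsGamma {n : ℕ} (a : Fin n → ℂ) (f G : ℂ → ℂ) : Prop :=
  DifferentiableOn ℂ G uDisk ∧ ∀ z ∈ uDisk, G z * calD a id z = calD a f z

/-- `p`-th power integral mean of `f` on the circle of radius `r`. -/
def circMean (p : ℝ) (f : ℂ → ℂ) (r : ℝ) : ℝ :=
  ∫ θ in (0:ℝ)..(2 * Real.pi), ‖f ((r : ℂ) * Complex.exp ((θ : ℂ) * Complex.I))‖ ^ p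

/-- The `H^p` norm of `f` (for `0 < p < ∞`). -/
def hpNorm (p : ℝ) (f : ℂ → ℂ) : ℝ :=
  (sSup {m : ℝ | ∃ r ∈ Set.Ico (0:ℝ) 1, m = circMean p f r}) ^ (1 / p)

/-- Membership in the Hardy space `H^p`, `0 < p < ∞`: holomorphic on the disk with
uniformly bounded integral means. -/
def MemHp (p : ℝ) (f : ℂ → ℂ) : Prop :=
  DifferentiableOn ℂ f uDisk ∧ ∃ C : ℝ, ∀ r ∈ Set.Ico (0:ℝ) 1, circMean p f r ≤ C

/-- Membership in `H^∞`: bounded holomorphic functions on the disk. -/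
def MemHinf (f : ℂ → ℂ) : Prop :=
  DifferentiableOn ℂ f uDisk ∧ ∃ C : ℝ, ∀ z ∈ uDisk, ‖f z‖ ≤ C

/-- The `H^∞` (sup) norm. -/
def hinfNorm (f : ℂ → ℂ) : ℝ := sSup {m : ℝ | ∃ z ∈ uDisk, m = ‖f z‖}

/-- The algebra of all polynomials in the functions `F 0, …, F (m-1)`. -/
def algGen (m : ℕ) (F : Fin m → (ℂ → ℂ)) : Set (ℂ → ℂ) :=
  {h | ∃ P : MvPolynomial (Fin m) ℂ, ∀ z : ℂ, h z = MvPolynomial.eval (fun i => F i z) P}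

/-- The algebra `ℂ[F,G]` of all polynomials in the two functions `F` and `G`. -/
def algGen2 (F G : ℂ → ℂ) : Set (ℂ → ℂ) := algGen 2 ![F, G]

/-- The (sequential) closure of `S` in `H^p`. -/
def hpClosure (p : ℝ) (S : Set (ℂ → ℂ)) : Set (ℂ → ℂ) :=
  {f | MemHp p f ∧ ∃ u : ℕ → (ℂ → ℂ), (∀ k, u k ∈ S) ∧
    Filter.Tendsto (fun k => hpNorm p (fun z => f z - u k z)) Filter.atTop (nhds 0)}

/-- `S` has finite codimension in `H^p`: finitely many functions in `H^p` together with `S`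
span all of `H^p`. -/
def FiniteCodimHp (p : ℝ) (S : Set (ℂ → ℂ)) : Prop :=
  ∃ (k : ℕ) (e : Fin k → (ℂ → ℂ)), (∀ i, MemHp p (e i)) ∧
    ∀ f, MemHp p f → ∃ (c : Fin k → ℂ) (s : ℂ → ℂ), s ∈ S ∧
      ∀ z ∈ uDisk, f z = s z + ∑ i, c i * e i z

/-- Inner function: bounded by 1, holomorphic, radial limits of modulus 1 a.e. -/
def IsInner (f : ℂ → ℂ) : Prop :=
  DifferentiableOn ℂ f uDisk ∧ (∀ z ∈ uDisk, ‖f z‖ ≤ 1) ∧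
  ∀ᵐ θ : ℝ ∂volume, ∃ l : ℂ, ‖l‖ = 1 ∧
    Filter.Tendsto (fun r : ℝ => f ((r : ℂ) * Complex.exp ((θ : ℂ) * Complex.I)))
      (nhdsWithin 1 (Set.Iio 1)) (nhds l)

/-- `J` divides `h`, with a quotient holomorphic on the disk. -/
def InnerDivides (J h : ℂ → ℂ) : Prop :=
  ∃ k : ℂ → ℂ, DifferentiableOn ℂ k uDisk ∧ ∀ z ∈ uDisk, h z = J z * k z

/-- Outer function: a holomorphic function on the disk whose only inner divisors are
unimodular constants (i.e. whose inner part is a unimodular constant). -/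
def IsOuter (h : ℂ → ℂ) : Prop :=
  DifferentiableOn ℂ h uDisk ∧
  ∀ J : ℂ → ℂ, IsInner J → InnerDivides J h →
    ∃ c : ℂ, ‖c‖ = 1 ∧ ∀ z ∈ uDisk, J z = c

/-- `I` is the inner part of `h`: `I` is inner and `h = I·F` with `F` outer. -/
def IsInnerPartOf (I h : ℂ → ℂ) : Prop :=
  IsInner I ∧ ∃ F : ℂ → ℂ, IsOuter F ∧ ∀ z ∈ uDisk, h z = I z * F z

/-- Finite Blaschke product (up to a unimodular constant factor). -/
def IsFiniteBlaschke (f : ℂ → ℂ) : Prop :=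
  ∃ (m : ℕ) (c : ℂ) (b : Fin m → ℂ), ‖c‖ = 1 ∧ (∀ i, b i ∈ uDisk) ∧
    ∀ z ∈ uDisk, f z = c * ∏ i, (b i - z) / (1 - (starRingEnd ℂ) (b i) * z)

/-- `h` has no singular inner factor: every zero-free inner divisor of `h` is a
unimodular constant. -/
def NoSingularInnerFactor (h : ℂ → ℂ) : Prop :=
  ∀ J : ℂ → ℂ, IsInner J → (∀ z ∈ uDisk, J z ≠ 0) → InnerDivides J h →
    ∃ c : ℂ, ‖c‖ = 1 ∧ ∀ z ∈ uDisk, J z = c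

/-! ### Circle means and a maximum principle -/

lemma circ_mem {r : ℝ} (hr : r ∈ Set.Ico (0:ℝ) 1) (θ : ℝ) :
    (r : ℂ) * Complex.exp ((θ : ℂ) * Complex.I) ∈ uDisk := by
  simp only [uDisk, mem_ball_zero_iff, norm_mul, Complex.norm_exp_ofReal_mul_I, mul_one,
    Complex.norm_real, Real.norm_eq_abs, abs_of_nonneg hr.1]
  exact hr.2

lemma circ_cont {E : Type*} [TopologicalSpace E] {f : ℂ → E} (hf : ContinuousOn f uDisk) {r : ℝ}
    (hr : r ∈ Set.Ico (0:ℝ) 1) :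
    Continuous fun θ : ℝ => f ((r : ℂ) * Complex.exp ((θ : ℂ) * Complex.I)) :=
  hf.comp_continuous (by fun_prop) (circ_mem hr)

lemma circ_mean {f : ℂ → ℂ} {r : ℝ} (hr : 0 ≤ r) (hf : DiffContOnCl ℂ f (ball 0 r)) :
    ∫ θ in (0:ℝ)..(2 * Real.pi), f ((r : ℂ) * Complex.exp ((θ : ℂ) * Complex.I))
      = 2 * Real.pi * f 0 := by
  have h := DiffContOnCl.circleAverage (f := f) (c := 0) (R := r) (by rwa [abs_of_nonneg hr])
  rw [Real.circleAverage_def] at h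
  simp only [circleMap_zero] at h
  rw [← h, Complex.real_smul]
  push_cast
  have : (Real.pi : ℂ) ≠ 0 := by exact_mod_cast Real.pi_ne_zero
  rw [← mul_assoc, mul_inv_cancel₀ (mul_ne_zero two_ne_zero this), one_mul]

lemma circ_mean_re {f : ℂ → ℂ} {r : ℝ} (hr : 0 ≤ r) (hf : DiffContOnCl ℂ f (ball 0 r)) :
    ∫ θ in (0:ℝ)..(2 * Real.pi), (f ((r : ℂ) * Complex.exp ((θ : ℂ) * Complex.I))).re
      = 2 * Real.pi * (f 0).re := by
  have h := circ_mean hr hf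
  have hc : Continuous fun θ : ℝ => f ((r : ℂ) * Complex.exp ((θ : ℂ) * Complex.I)) := by
    refine hf.continuousOn_ball.comp_continuous (by fun_prop) (fun θ => ?_)
    simp [Complex.norm_exp_ofReal_mul_I, abs_of_nonneg hr]
  have h2 := Complex.reCLM.intervalIntegral_comp_comm
    (hc.intervalIntegrable (μ := volume) 0 (2 * Real.pi))
  simp only [Complex.reCLM_apply] at h2
  rw [h2, h]
  have : (2 * (Real.pi : ℂ) * f 0) = ((2 * Real.pi : ℝ) : ℂ) * f 0 := by push_cast; ring
  rw [this, Complex.re_ofReal_mul]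

/-- Maximum principle for the subharmonic function `|f|^q - Re Q`. At an interior maximum of positive
height `f` does not vanish, so `|f|^q` is locally the modulus of a holomorphic function, and the
holomorphic maximum principle shows that the set of maximum points is open. -/
lemma rpow_norm_le_re {f Q : ℂ → ℂ} {q : ℝ} (hq : 0 < q) (hf : DiffContOnCl ℂ f (ball 0 1))
    (hQ : DiffContOnCl ℂ Q (ball 0 1))
    (hb : ∀ z ∈ sphere (0:ℂ) 1, ‖f z‖ ^ q ≤ (Q z).re) :
    ∀ z ∈ closedBall (0:ℂ) 1, ‖f z‖ ^ q ≤ (Q z).re := by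
  have hQ0 : ∀ z ∈ closedBall (0:ℂ) 1, 0 ≤ (Q z).re := by
    intro z hz
    have h1 : ‖Complex.exp (-(Q z))‖ ≤ 1 := by
      refine norm_le_of_forall_mem_frontier_norm_le (U := ball (0:ℂ) 1) (f := fun z => exp (-(Q z)))
        isBounded_ball ?_ ?_ (by rwa [closure_ball _ one_ne_zero])
      · exact (Complex.differentiable_exp.diffContOnCl (s := univ)).comp hQ.neg (fun _ _ => mem_univ _)
      · intro w hw
        rw [frontier_ball _ one_ne_zero] at hw
        rw [Complex.norm_exp, Real.exp_le_one_iff, neg_re, neg_nonpos]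
        exact (Real.rpow_nonneg (norm_nonneg _) _).trans (hb w hw)
    rw [Complex.norm_exp, Real.exp_le_one_iff, neg_re] at h1
    linarith
  set v : ℂ → ℝ := fun z => ‖f z‖ ^ q - (Q z).re with hv
  have hvc : ContinuousOn v (closedBall 0 1) := by
    refine ContinuousOn.sub ?_ (Complex.continuous_re.comp_continuousOn hQ.continuousOn_ball)
    exact (hf.continuousOn_ball.norm).rpow_const (fun _ _ => Or.inr hq.le)
  have hK : IsCompact (closedBall (0:ℂ) 1) := isCompact_closedBall 0 1
  obtain ⟨z1, hz1, hmax⟩ := hK.exists_isMaxOn ⟨0, by simp⟩ hvc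
  by_contra! hcon
  obtain ⟨y, hy, hyv⟩ := hcon
  have hpos : 0 < v z1 := lt_of_lt_of_le (by simp only [hv]; linarith) (hmax hy)
  -- a maximum point of largest modulus
  have hK2 : IsCompact (closedBall (0:ℂ) 1 ∩ v ⁻¹' {v z1}) :=
    hK.of_isClosed_subset (hvc.preimage_isClosed_of_isClosed isClosed_closedBall isClosed_singleton)
      inter_subset_left
  obtain ⟨z0, ⟨hz0, hz0v⟩, hz0max⟩ := hK2.exists_isMaxOn ⟨z1, hz1, rfl⟩ continuous_norm.continuousOn
  have hz0v' : v z0 = v z1 := hz0v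
  have hz0b : z0 ∈ ball (0:ℂ) 1 := by
    rcases lt_or_eq_of_le (mem_closedBall_zero_iff.1 hz0) with h | h
    · simpa using h
    · have := hb z0 (by simpa using h)
      simp only [hv] at hz0v' hpos
      linarith
  have hf0 : f z0 ≠ 0 := by
    intro h
    have := hQ0 z0 hz0
    have h3 : v z0 = -(Q z0).re := by simp [hv, h, Real.zero_rpow hq.ne']
    linarith
  have hnb : ∀ᶠ z in 𝓝 z0, z ∈ ball (0:ℂ) 1 := isOpen_ball.mem_nhds hz0b
  -- local holomorphic branch of `f ^ q`, rotated to be positive at `z0`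
  set F : ℂ → ℂ := fun z => exp (q * Complex.log (f z / f z0)) * ((‖f z0‖ ^ q : ℝ) : ℂ) with hF
  have hFd : ∀ᶠ z in 𝓝 z0, DifferentiableAt ℂ F z ∧ ‖F z‖ = ‖f z‖ ^ q := by
    have hfd0 : ∀ᶠ z in 𝓝 z0, DifferentiableAt ℂ f z :=
      hnb.mono fun z hz => hf.differentiableOn.differentiableAt (isOpen_ball.mem_nhds hz)
    have hsl : ∀ᶠ z in 𝓝 z0, f z / f z0 ∈ slitPlane := by
      have hc : ContinuousAt (fun z => f z / f z0) z0 := (hfd0.self_of_nhds.continuousAt).div_const _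
      refine hc.eventually_mem (isOpen_slitPlane.mem_nhds ?_)
      simp [div_self hf0]
    filter_upwards [hfd0, hsl] with z h1 h2
    constructor
    · have : DifferentiableAt ℂ (fun z => Complex.log (f z / f z0)) z := (h1.div_const _).clog h2
      simp only [hF]
      fun_prop
    · have hne : f z / f z0 ≠ 0 := slitPlane_ne_zero h2
      simp only [hF, norm_mul, Complex.norm_exp, Complex.re_ofReal_mul, Complex.log_re, norm_div,
        Complex.norm_real, Real.norm_eq_abs, abs_of_nonneg (Real.rpow_nonneg (norm_nonneg _) _)]
      have hp1 : 0 < ‖f z0‖ := norm_pos_iff.2 hf0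
      have hp2 : 0 < ‖f z‖ := norm_pos_iff.2 (fun h => hne (by simp [h]))
      rw [mul_comm q, ← Real.rpow_def_of_pos (by positivity), Real.div_rpow hp2.le hp1.le]
      field_simp
  have hF0 : F z0 = ((‖f z0‖ ^ q : ℝ) : ℂ) := by simp [hF, div_self hf0]
  have hQd : ∀ᶠ z in 𝓝 z0, DifferentiableAt ℂ Q z :=
    hnb.mono fun z hz => hQ.differentiableOn.differentiableAt (isOpen_ball.mem_nhds hz)
  have hre : ∀ᶠ z in 𝓝 z0, (F z - Q z).re ≤ v z := by
    filter_upwards [hFd] with z hz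
    simp only [hv, sub_re, ← hz.2]
    linarith [Complex.re_le_norm (F z)]
  have hre0 : (F z0 - Q z0).re = v z0 := by rw [sub_re, hF0, ofReal_re]
  have hconst := Complex.eventually_eq_of_isLocalMax_norm (f := fun z => exp (F z - Q z)) (c := z0)
    (by filter_upwards [hFd, hQd] with z h1 h2 using (h1.1.sub h2).cexp)
    (by
      filter_upwards [hre, hnb] with z h1 h2
      simp only [Function.comp, Complex.norm_exp]
      rw [hre0]
      exact Real.exp_le_exp.2 (h1.trans ((hmax (ball_subset_closedBall h2)).trans hz0v'.ge)))
  have hopen : ∀ᶠ z in 𝓝 z0, ‖z‖ ≤ ‖z0‖ := by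
    filter_upwards [hconst, hre, hnb] with z h1 h2 h3
    refine hz0max ⟨ball_subset_closedBall h3, ?_⟩
    have h4 := congrArg norm h1
    rw [Complex.norm_exp, Complex.norm_exp, Real.exp_eq_exp, hre0, hz0v'] at h4
    exact le_antisymm (hmax (ball_subset_closedBall h3)) (h4.symm.le.trans h2)
  by_cases h0 : z0 = 0
  · rw [h0] at hopen
    have : ∀ᶠ z in 𝓝[≠] (0:ℂ), False := by
      filter_upwards [hopen.filter_mono nhdsWithin_le_nhds, self_mem_nhdsWithin] with z h1 h2
      exact h2 (by simpa using h1)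
    exact this.exists.choose_spec
  · have ht : Tendsto (fun t : ℝ => ((1 + t : ℝ) : ℂ) * z0) (𝓝[>] 0) (𝓝 z0) := by
      have : Continuous fun t : ℝ => ((1 + t : ℝ) : ℂ) * z0 := by fun_prop
      have h := this.tendsto 0
      simp only [add_zero, ofReal_one, one_mul] at h
      exact h.mono_left nhdsWithin_le_nhds
    obtain ⟨t, h1, h2⟩ := ((ht.eventually hopen).and self_mem_nhdsWithin).exists
    have h2' : 0 < t := h2
    rw [norm_mul, Complex.norm_real, Real.norm_eq_abs, abs_of_pos (by linarith)] at h1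
    have : 0 < ‖z0‖ := norm_pos_iff.2 h0
    nlinarith

/-! ### Power series with square summable coefficients, Littlewood subordination -/

/-- On the unit circle the squared modulus of a polynomial is the real part of another polynomial,
whose value at `0` is the sum of the squared moduli of the coefficients. -/
lemma normSq_poly (c : ℕ → ℂ) (N : ℕ) : ∃ Q : ℂ → ℂ, Differentiable ℂ Q ∧
    (Q 0).re = ∑ k ∈ Finset.range N, ‖c k‖ ^ 2 ∧
    ∀ w : ℂ, ‖w‖ = 1 → ‖∑ k ∈ Finset.range N, c k * w ^ k‖ ^ 2 = (Q w).re := by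
  refine ⟨fun w => ∑ k ∈ Finset.range N, ∑ l ∈ Finset.range N,
    if l ≤ k then c k * (starRingEnd ℂ) (c l) * w ^ (k - l)
      else (starRingEnd ℂ) (c k) * c l * w ^ (l - k), ?_, ?_, ?_⟩
  · refine Differentiable.fun_sum fun k _ => Differentiable.fun_sum fun l _ => ?_
    split_ifs <;> fun_prop
  · rw [Complex.re_sum]
    refine Finset.sum_congr rfl fun k hk => ?_
    rw [Finset.sum_eq_single k]
    · simp only [le_refl, if_true, Nat.sub_self, pow_zero, mul_one, Complex.mul_conj,
        Complex.normSq_eq_norm_sq, ofReal_re]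
    · intro l _ hl
      rcases lt_or_gt_of_ne hl with h | h
      · rw [if_pos h.le, zero_pow (by omega), mul_zero]
      · rw [if_neg (by omega), zero_pow (by omega), mul_zero]
    · intro h; exact absurd hk h
  · intro w hw
    have hww : w * (starRingEnd ℂ) w = 1 := by
      rw [Complex.mul_conj, Complex.normSq_eq_norm_sq, hw]; simp
    have h1 : ∀ z : ℂ, ‖z‖ ^ 2 = (z * (starRingEnd ℂ) z).re := fun z => by
      rw [Complex.mul_conj, Complex.normSq_eq_norm_sq, ofReal_re]
    rw [h1, map_sum, Finset.sum_mul_sum, Complex.re_sum, Complex.re_sum]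
    refine Finset.sum_congr rfl fun k _ => ?_
    rw [Complex.re_sum, Complex.re_sum]
    refine Finset.sum_congr rfl fun l _ => ?_
    split_ifs with h
    · obtain ⟨m, rfl⟩ := Nat.exists_eq_add_of_le h
      congr 1
      rw [Nat.add_sub_cancel_left, map_mul, map_pow]
      calc c (l + m) * w ^ (l + m) * ((starRingEnd ℂ) (c l) * (starRingEnd ℂ) w ^ l)
          = c (l + m) * (starRingEnd ℂ) (c l) * w ^ m * (w * (starRingEnd ℂ) w) ^ l := by ring
        _ = _ := by rw [hww, one_pow, mul_one]
    · obtain ⟨m, rfl⟩ := Nat.exists_eq_add_of_le (not_le.1 h).le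
      rw [Nat.add_sub_cancel_left, ← Complex.conj_re]
      congr 1
      simp only [map_mul, map_pow, Complex.conj_conj]
      calc (starRingEnd ℂ) (c k) * (starRingEnd ℂ) w ^ k * (c (k + m) * w ^ (k + m))
          = (starRingEnd ℂ) (c k) * c (k + m) * w ^ m * (w * (starRingEnd ℂ) w) ^ k := by ring
        _ = _ := by rw [hww, one_pow, mul_one]

lemma parseval_fin (c : ℕ → ℂ) (N : ℕ) :
    ∫ θ in (0:ℝ)..(2 * Real.pi), ‖∑ k ∈ Finset.range N, c k * Complex.exp ((θ : ℂ) * I) ^ k‖ ^ 2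
      = 2 * Real.pi * ∑ k ∈ Finset.range N, ‖c k‖ ^ 2 := by
  obtain ⟨Q, hQ, hQ0, hQw⟩ := normSq_poly c N
  have h := circ_mean_re (f := Q) (r := 1) zero_le_one hQ.diffContOnCl
  rw [hQ0] at h
  rw [← h]
  refine intervalIntegral.integral_congr fun θ _ => ?_
  simp only [ofReal_one, one_mul]
  exact hQw _ (Complex.norm_exp_ofReal_mul_I θ)

/-- Littlewood subordination in `H²`, for polynomials: `|F|²` is majorized in the disk by a harmonic
function whose value at the origin is the squared `H²` norm. -/
lemma littlewood_fin (c : ℕ → ℂ) (N : ℕ) {φ : ℂ → ℂ} (hφ : DifferentiableOn ℂ φ uDisk)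
    (hm : MapsTo φ uDisk uDisk) (h0 : φ 0 = 0) {r : ℝ} (hr : r ∈ Set.Ico (0:ℝ) 1) :
    ∫ θ in (0:ℝ)..(2 * Real.pi), ‖∑ k ∈ Finset.range N,
        c k * φ ((r : ℂ) * Complex.exp ((θ : ℂ) * I)) ^ k‖ ^ 2
      ≤ 2 * Real.pi * ∑ k ∈ Finset.range N, ‖c k‖ ^ 2 := by
  obtain ⟨Q, hQ, hQ0, hQw⟩ := normSq_poly c N
  have hmaj := rpow_norm_le_re (f := fun w => ∑ k ∈ Finset.range N, c k * w ^ k) (Q := Q) (q := 2)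
    two_pos (Differentiable.diffContOnCl (by fun_prop)) hQ.diffContOnCl
    (fun z hz => by rw [Real.rpow_two]; exact (hQw z (by simpa using hz)).le)
  have hQφ : DifferentiableOn ℂ (fun z => Q (φ z)) uDisk := hQ.comp_differentiableOn hφ
  have h := circ_mean_re (f := fun z => Q (φ z)) hr.1
    (hQφ.diffContOnCl_ball (closedBall_subset_ball hr.2))
  simp only [h0, hQ0] at h
  rw [← h]
  have hφc := circ_cont hφ.continuousOn hr
  have hQc := circ_cont hQφ.continuousOn hr
  refine intervalIntegral.integral_mono_on (by positivity) ?_ ?_ fun θ _ => ?_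
  · exact ((continuous_finsetSum _ fun k _ => continuous_const.mul (hφc.pow k)).norm.pow
      2).intervalIntegrable _ _
  · exact (Complex.continuous_re.comp hQc).intervalIntegrable _ _
  · rw [← Real.rpow_two]
    exact hmaj _ (ball_subset_closedBall (hm (circ_mem hr θ)))

lemma tendsto_integral_partial {c : ℕ → ℂ} {s : ℝ} (hs : Summable fun k => ‖c k‖ * s ^ k)
    {φ : ℝ → ℂ} (hφ : Continuous φ) (hφs : ∀ θ, ‖φ θ‖ ≤ s) :
    Tendsto (fun N => ∫ θ in (0:ℝ)..(2 * Real.pi), ‖∑ k ∈ Finset.range N, c k * φ θ ^ k‖ ^ 2)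
      atTop (𝓝 (∫ θ in (0:ℝ)..(2 * Real.pi), ‖∑' k, c k * φ θ ^ k‖ ^ 2)) := by
  have hle : ∀ θ k, ‖c k * φ θ ^ k‖ ≤ ‖c k‖ * s ^ k := fun θ k => by
    rw [norm_mul, norm_pow]
    have := hφs θ
    gcongr
  have hs0 : 0 ≤ s := (norm_nonneg _).trans (hφs 0)
  refine intervalIntegral.tendsto_integral_filter_of_dominated_convergence
    (fun _ => (∑' k, ‖c k‖ * s ^ k) ^ 2) ?_ ?_ ?_ ?_
  · exact Eventually.of_forall fun N => (by fun_prop : Continuous fun θ =>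
      ‖∑ k ∈ Finset.range N, c k * φ θ ^ k‖ ^ 2).aestronglyMeasurable
  · refine Eventually.of_forall fun N => Eventually.of_forall fun θ _ => ?_
    rw [Real.norm_of_nonneg (by positivity)]
    gcongr
    refine (norm_sum_le _ _).trans ((Finset.sum_le_sum fun k _ => hle θ k).trans ?_)
    exact hs.sum_le_tsum _ (fun k _ => by positivity)
  · exact intervalIntegrable_const
  · refine Eventually.of_forall fun θ _ => ?_
    have hsum : Summable fun k => c k * φ θ ^ k := Summable.of_norm_bounded hs (hle θ)
    exact (hsum.hasSum.tendsto_sum_nat.norm).pow 2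

lemma coeff_bdd {c : ℕ → ℂ} {C : ℝ} (hC : ∀ N, ∑ k ∈ Finset.range N, ‖c k‖ ^ 2 ≤ C) (k : ℕ) :
    ‖c k‖ ≤ C + 1 := by
  have h1 : ‖c k‖ ^ 2 ≤ C :=
    (Finset.single_le_sum (f := fun k => ‖c k‖ ^ 2) (fun i _ => by positivity)
      (Finset.self_mem_range_succ k)).trans (hC (k + 1))
  nlinarith [sq_nonneg (‖c k‖ - 1)]

lemma coeff_summable {c : ℕ → ℂ} {K : ℝ} (hK : ∀ k, ‖c k‖ ≤ K) {s : ℝ} (hs0 : 0 ≤ s) (hs : s < 1) :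
    Summable fun k => ‖c k‖ * s ^ k := by
  refine Summable.of_nonneg_of_le (fun k => by positivity) (fun k => ?_)
    ((summable_geometric_of_lt_one hs0 hs).mul_left K)
  have := hK k
  gcongr

/-- Littlewood subordination in `H²`, by a limit in `littlewood_fin`. -/
lemma littlewood {c : ℕ → ℂ} {C : ℝ} (hC : ∀ N, ∑ k ∈ Finset.range N, ‖c k‖ ^ 2 ≤ C)
    {φ : ℂ → ℂ} (hφ : DifferentiableOn ℂ φ uDisk)
    (hm : MapsTo φ uDisk uDisk) (h0 : φ 0 = 0) {r : ℝ} (hr : r ∈ Set.Ico (0:ℝ) 1) :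
    circMean 2 (fun z => ∑' k, c k * φ z ^ k) r ≤ 2 * Real.pi * C := by
  have hc := circ_cont hφ.continuousOn hr
  have hcomp : IsCompact (closedBall (0:ℂ) r) := isCompact_closedBall 0 r
  have hsub : closedBall (0:ℂ) r ⊆ uDisk := closedBall_subset_ball hr.2
  obtain ⟨z0, hz0, hz0m⟩ := hcomp.exists_isMaxOn ⟨0, by simpa using hr.1⟩
    (hφ.continuousOn.mono hsub).norm
  have hs1 : ‖φ z0‖ < 1 := by simpa [uDisk] using hm (hsub hz0)
  have ht := tendsto_integral_partial (c := c) (s := ‖φ z0‖)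
    (coeff_summable (coeff_bdd hC) (norm_nonneg _) hs1) hc (fun θ => hz0m (by
      simp [Complex.norm_exp_ofReal_mul_I, abs_of_nonneg hr.1]))
  unfold circMean
  simp only [Real.rpow_two]
  refine le_of_tendsto ht (Eventually.of_forall fun N => ?_)
  refine (littlewood_fin c N hφ hm h0 hr).trans ?_
  have := hC N
  gcongr

lemma powser_diff {c : ℕ → ℂ} {K : ℝ} (hK : ∀ k, ‖c k‖ ≤ K) :
    DifferentiableOn ℂ (fun z => ∑' k, c k * z ^ k) uDisk := by
  intro z hz
  have hz1 : ‖z‖ < 1 := by simpa [uDisk] using hz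
  obtain ⟨s, hs, hs1⟩ := exists_between hz1
  have hd : DifferentiableOn ℂ (fun z => ∑' k, c k * z ^ k) (ball 0 s) := by
    refine differentiableOn_tsum_of_summable_norm
      (coeff_summable hK ((norm_nonneg z).trans hs.le) hs1) (fun k => by fun_prop) isOpen_ball ?_
    intro k w hw
    have : ‖w‖ ≤ s := by simpa using (mem_ball_zero_iff.1 hw).le
    rw [norm_mul, norm_pow]
    gcongr
  exact (hd.differentiableAt (isOpen_ball.mem_nhds (by simpa using hs))).differentiableWithinAt

/-- Taylor coefficients of a function bounded by `M` are square summable, with sum at most `M²`. -/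
lemma hinf_coeff {F : ℂ → ℂ} (hF : DifferentiableOn ℂ F uDisk) {M : ℝ} (hM : ∀ z ∈ uDisk, ‖F z‖ ≤ M) :
    ∃ c : ℕ → ℂ, (∀ z ∈ uDisk, HasSum (fun k => c k * z ^ k) (F z)) ∧
      ∀ N, ∑ k ∈ Finset.range N, ‖c k‖ ^ 2 ≤ M ^ 2 := by
  set c : ℕ → ℂ := fun k => ((k.factorial : ℂ))⁻¹ * iteratedDeriv k F 0 with hc
  have hsum : ∀ z ∈ uDisk, HasSum (fun k => c k * z ^ k) (F z) := by
    intro z hz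
    have := Complex.hasSum_taylorSeries_on_ball (f := F) (c := 0) (r := 1)
      (by simpa [uDisk] using hF) (z := z) (by simpa [uDisk] using hz)
    have e : (fun k => c k * z ^ k)
        = fun k : ℕ => (k.factorial : ℂ)⁻¹ • (z - 0) ^ k • iteratedDeriv k F 0 := by
      funext k
      simp only [hc, smul_eq_mul, sub_zero]; ring
    rwa [e]
  refine ⟨c, hsum, fun N => ?_⟩
  have key : ∀ r ∈ Set.Ioo (0:ℝ) 1, ∑ k ∈ Finset.range N, ‖c k * (r:ℂ) ^ k‖ ^ 2 ≤ M ^ 2 := by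
    intro r hr
    have hr' : r ∈ Set.Ico (0:ℝ) 1 := ⟨hr.1.le, hr.2⟩
    have hs : Summable fun k => ‖c k‖ * r ^ k := by
      have := (hsum r (by simpa [uDisk, abs_of_pos hr.1] using hr.2)).summable.norm
      simpa [norm_mul, norm_pow, abs_of_pos hr.1] using this
    have ht := tendsto_integral_partial hs (φ := fun θ => (r : ℂ) * Complex.exp ((θ : ℂ) * I))
      (by fun_prop) (fun θ => by simp [Complex.norm_exp_ofReal_mul_I, abs_of_pos hr.1])
    have hFc := circ_cont hF.continuousOn hr'
    have hle : ∫ θ in (0:ℝ)..(2 * Real.pi),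
        ‖∑' k, c k * ((r : ℂ) * Complex.exp ((θ : ℂ) * I)) ^ k‖ ^ 2 ≤ 2 * Real.pi * M ^ 2 := by
      have : ∀ θ : ℝ, ∑' k, c k * ((r : ℂ) * Complex.exp ((θ : ℂ) * I)) ^ k
          = F ((r : ℂ) * Complex.exp ((θ : ℂ) * I)) := fun θ => (hsum _ (circ_mem hr' θ)).tsum_eq
      simp only [this]
      calc _ ≤ ∫ θ in (0:ℝ)..(2 * Real.pi), M ^ 2 := by
            refine intervalIntegral.integral_mono_on (by positivity)
              ((hFc.norm.pow 2).intervalIntegrable _ _) intervalIntegrable_const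
              fun θ _ => ?_
            have := hM _ (circ_mem hr' θ)
            gcongr
        _ = _ := by simp
    have h2 : 2 * Real.pi * ∑ k ∈ Finset.range N, ‖c k * (r:ℂ) ^ k‖ ^ 2 ≤ 2 * Real.pi * M ^ 2 := by
      refine le_trans (ge_of_tendsto ht (eventually_atTop.2 ⟨N, fun N' hN' => ?_⟩)) hle
      have hp := parseval_fin (fun k => c k * (r:ℂ) ^ k) N'
      simp only [mul_pow, ← mul_assoc] at hp ⊢
      rw [hp]
      gcongr
    exact le_of_mul_le_mul_left h2 (by positivity)
  have hcont : Continuous fun r : ℝ => ∑ k ∈ Finset.range N, ‖c k * (r:ℂ) ^ k‖ ^ 2 := by fun_prop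
  have ht : Tendsto (fun r : ℝ => ∑ k ∈ Finset.range N, ‖c k * (r:ℂ) ^ k‖ ^ 2) (𝓝[<] 1)
      (𝓝 (∑ k ∈ Finset.range N, ‖c k‖ ^ 2)) := by
    have := (hcont.tendsto 1).mono_left (nhdsWithin_le_nhds (s := Iio 1))
    simpa using this
  refine le_of_tendsto ht ?_
  filter_upwards [Ioo_mem_nhdsLT (show (0:ℝ) < 1 by norm_num)] with r hr using key r hr

/-- Approximation of `F ∈ H^∞` by polynomials with a uniform bound, in quadratic mean and uniformly over
all compositions with self-maps of the disk fixing the origin. -/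
lemma hinf_approx {F : ℂ → ℂ} (hF : DifferentiableOn ℂ F uDisk) {M : ℝ} (hM : ∀ z ∈ uDisk, ‖F z‖ ≤ M)
    {ε : ℝ} (hε : 0 < ε) : ∃ P : Polynomial ℂ, (∀ z ∈ uDisk, ‖P.eval z‖ ≤ M + 1) ∧
      ∀ φ : ℂ → ℂ, DifferentiableOn ℂ φ uDisk → MapsTo φ uDisk uDisk → φ 0 = 0 →
        ∀ r ∈ Set.Ico (0:ℝ) 1, circMean 2 (fun z => F (φ z) - P.eval (φ z)) r ≤ 2 * Real.pi * ε := by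
  obtain ⟨c, hsum, hC⟩ := hinf_coeff hF hM
  have hs2 : Summable fun k => ‖c k‖ ^ 2 :=
    summable_of_sum_range_le (fun k => by positivity) hC
  have htρ : Tendsto (fun ρ : ℝ => ∑' k, ‖c k‖ ^ 2 * (1 - ρ ^ k) ^ 2) (𝓝[<] 1) (𝓝 0) := by
    have := tendsto_tsum_of_dominated_convergence (𝓕 := 𝓝[<] (1:ℝ))
      (f := fun (ρ : ℝ) k => ‖c k‖ ^ 2 * (1 - ρ ^ k) ^ 2) (g := fun _ => 0)
      (bound := fun k => ‖c k‖ ^ 2) hs2 ?_ ?_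
    · simpa using this
    · intro k
      have hcont : Continuous fun ρ : ℝ => ‖c k‖ ^ 2 * (1 - ρ ^ k) ^ 2 := by fun_prop
      have := (hcont.tendsto 1).mono_left (nhdsWithin_le_nhds (s := Iio 1))
      simpa using this
    · filter_upwards [Ioo_mem_nhdsLT (show (0:ℝ) < 1 by norm_num)] with ρ hρ k
      rw [Real.norm_of_nonneg (by positivity)]
      have h1 : 0 ≤ ρ ^ k := pow_nonneg hρ.1.le k
      have h2 : ρ ^ k ≤ 1 := pow_le_one₀ hρ.1.le hρ.2.le
      have h3 : (1 - ρ ^ k) ^ 2 ≤ 1 := by nlinarith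
      exact mul_le_of_le_one_right (by positivity) h3
  obtain ⟨ρ, hρε, hρ⟩ := ((htρ.eventually (gt_mem_nhds (half_pos hε))).and
    (Ioo_mem_nhdsLT (show (0:ℝ) < 1 by norm_num))).exists
  have hρs : Summable fun k => ‖c k‖ * ρ ^ k := coeff_summable (coeff_bdd hC) hρ.1.le hρ.2
  obtain ⟨N, hN1, hN2⟩ := (((tendsto_sum_nat_add fun k => ‖c k‖ ^ 2).eventually
    (gt_mem_nhds (half_pos hε))).and ((tendsto_sum_nat_add fun k => ‖c k‖ * ρ ^ k).eventually
    (gt_mem_nhds one_pos))).exists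
  refine ⟨∑ k ∈ Finset.range N, Polynomial.C (c k * (ρ:ℂ) ^ k) * Polynomial.X ^ k, ?_, ?_⟩
  · intro z hz
    have hz1 : ‖z‖ < 1 := by simpa [uDisk] using hz
    have hρz : (ρ:ℂ) * z ∈ uDisk := by
      simp only [uDisk, mem_ball_zero_iff, norm_mul, Complex.norm_real, Real.norm_eq_abs,
        abs_of_pos hρ.1]
      nlinarith [hρ.1, hρ.2, norm_nonneg z]
    have h1 := hsum _ hρz
    have h2 := h1.summable.sum_add_tsum_nat_add N
    rw [h1.tsum_eq] at h2
    have h3 : Polynomial.eval z (∑ k ∈ Finset.range N, Polynomial.C (c k * (ρ:ℂ) ^ k) * Polynomial.X ^ k)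
        = ∑ k ∈ Finset.range N, c k * ((ρ:ℂ) * z) ^ k := by
      simp [Polynomial.eval_finsetSum, mul_pow, mul_assoc]
    rw [h3, eq_sub_of_add_eq h2]
    refine (norm_sub_le _ _).trans (add_le_add (hM _ hρz) ?_)
    have hle : ∀ k, ‖c (k + N) * ((ρ:ℂ) * z) ^ (k + N)‖ ≤ ‖c (k + N)‖ * ρ ^ (k + N) := by
      intro k
      rw [norm_mul, norm_pow, norm_mul, Complex.norm_real, Real.norm_eq_abs, abs_of_pos hρ.1]
      have h0 : 0 ≤ ρ := hρ.1.le
      gcongr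
      exact mul_le_of_le_one_right h0 hz1.le
    exact (tsum_of_norm_bounded ((summable_nat_add_iff N).2 hρs).hasSum hle).trans hN2.le
  · intro φ hφ hm h0 r hr
    set d : ℕ → ℂ := fun k => if k < N then c k * (1 - (ρ:ℂ) ^ k) else c k with hd
    have hsρ : Summable fun k => ‖c k‖ ^ 2 * (1 - ρ ^ k) ^ 2 := by
      refine Summable.of_nonneg_of_le (fun k => by positivity) (fun k => ?_) hs2
      have h1 : 0 ≤ ρ ^ k := pow_nonneg hρ.1.le k
      have h2 : ρ ^ k ≤ 1 := pow_le_one₀ hρ.1.le hρ.2.le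
      have h3 : (1 - ρ ^ k) ^ 2 ≤ 1 := by nlinarith
      exact mul_le_of_le_one_right (by positivity) h3
    have hdsq : ∀ k, k < N → ‖d k‖ ^ 2 = ‖c k‖ ^ 2 * (1 - ρ ^ k) ^ 2 := by
      intro k hk
      simp only [hd, hk, if_true, norm_mul, mul_pow]
      congr 1
      have : (1 - (ρ:ℂ) ^ k) = ((1 - ρ ^ k : ℝ) : ℂ) := by push_cast; ring
      rw [this, Complex.norm_real, Real.norm_eq_abs, sq_abs]
    have hdC : ∀ L, ∑ k ∈ Finset.range L, ‖d k‖ ^ 2 ≤ ε := by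
      intro L
      have hmono : ∑ k ∈ Finset.range L, ‖d k‖ ^ 2 ≤ ∑ k ∈ Finset.range (N + L), ‖d k‖ ^ 2 :=
        Finset.sum_le_sum_of_subset_of_nonneg
          (Finset.range_mono (by omega)) (fun _ _ _ => by positivity)
      refine hmono.trans ?_
      rw [Finset.sum_range_add]
      have e1 : ∑ k ∈ Finset.range N, ‖d k‖ ^ 2 ≤ ε / 2 := by
        rw [Finset.sum_congr rfl fun k hk => hdsq k (Finset.mem_range.1 hk)]
        exact (hsρ.sum_le_tsum _ (fun k _ => by positivity)).trans hρε.le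
      have e2 : ∑ k ∈ Finset.range L, ‖d (N + k)‖ ^ 2 ≤ ε / 2 := by
        have : ∀ k, d (N + k) = c (k + N) := fun k => by simp [hd, add_comm]
        simp only [this]
        exact (((summable_nat_add_iff N).2 hs2).sum_le_tsum _ (fun k _ => by positivity)).trans hN1.le
      linarith
    have h1 := littlewood hdC hφ hm h0 hr
    have heq : circMean 2 (fun z => F (φ z) - Polynomial.eval (φ z)
        (∑ k ∈ Finset.range N, Polynomial.C (c k * (ρ:ℂ) ^ k) * Polynomial.X ^ k)) r
        = circMean 2 (fun z => ∑' k, d k * φ z ^ k) r := by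
      unfold circMean
      refine intervalIntegral.integral_congr fun θ _ => ?_
      have hw := hm (circ_mem hr θ)
      set w := φ ((r : ℂ) * Complex.exp ((θ : ℂ) * I)) with hwdef
      simp only []
      congr 2
      have hfin : HasSum (fun k => if k < N then c k * (ρ:ℂ) ^ k * w ^ k else 0)
          (∑ k ∈ Finset.range N, c k * (ρ:ℂ) ^ k * w ^ k) := by
        have := hasSum_sum_of_ne_finset_zero (L := SummationFilter.unconditional ℕ) (s := Finset.range N)
          (f := fun k => if k < N then c k * (ρ:ℂ) ^ k * w ^ k else 0)
          (fun k hk => by simp at hk; simp [hk])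
        rwa [Finset.sum_congr rfl (fun k hk => if_pos (Finset.mem_range.1 hk))] at this
      have := ((hsum w hw).sub hfin).tsum_eq
      simp only [Polynomial.eval_finsetSum, Polynomial.eval_mul, Polynomial.eval_C,
        Polynomial.eval_pow, Polynomial.eval_X]
      rw [← this]
      refine tsum_congr fun k => ?_
      by_cases hk : k < N
      · simp only [hd, hk, if_true]; ring
      · simp only [hd, hk, if_false]; ring
    rw [heq]
    exact h1

/-! ### Harmonic majorants of functions in the Hardy space -/

/-- Continuous functions on the circle are, up to a bounded error and from above, real parts of
polynomials (density of trigonometric polynomials). -/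
lemma exists_poly_re {s : ℂ → ℝ} (hs : ContinuousOn s (sphere 0 1)) :
    ∃ Q : Polynomial ℂ, ∀ w ∈ sphere (0:ℂ) 1, s w ≤ (Q.eval w).re ∧ (Q.eval w).re ≤ s w + 1 := by
  have : Fact (0 < 2 * Real.pi) := ⟨Real.two_pi_pos⟩
  have hspan : ∀ t ∈ Submodule.span ℂ (range (@fourier (2 * Real.pi))), ∃ Q1 Q2 : Polynomial ℂ,
      ∀ θ : ℝ, t (θ : AddCircle (2 * Real.pi)) = Q1.eval (Complex.exp (θ * I))
        + (starRingEnd ℂ) (Q2.eval (Complex.exp (θ * I))) := by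
    intro t ht
    induction ht using Submodule.span_induction with
    | mem x hx =>
      obtain ⟨k, rfl⟩ := hx
      have h2 : ∀ θ : ℝ, fourier k (θ : AddCircle (2 * Real.pi)) = Complex.exp (k * (θ * I)) := by
        intro θ
        rw [fourier_coe_apply]
        congr 1
        have : (Real.pi : ℂ) ≠ 0 := by exact_mod_cast Real.pi_ne_zero
        push_cast
        field_simp
      rcases Int.eq_nat_or_neg k with ⟨m, rfl | rfl⟩
      · refine ⟨Polynomial.X ^ m, 0, fun θ => ?_⟩
        rw [h2]
        simp [← Complex.exp_nat_mul]
      · refine ⟨0, Polynomial.X ^ m, fun θ => ?_⟩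
        rw [h2]
        simp [← Complex.exp_nat_mul, ← Complex.exp_conj]
    | zero => exact ⟨0, 0, fun θ => by simp⟩
    | add x y _ _ hx hy =>
      obtain ⟨P1, P2, h1⟩ := hx
      obtain ⟨R1, R2, h2⟩ := hy
      refine ⟨P1 + R1, P2 + R2, fun θ => ?_⟩
      simp only [ContinuousMap.add_apply, h1, h2, Polynomial.eval_add, map_add]
      ring
    | smul a x _ hx =>
      obtain ⟨P1, P2, h1⟩ := hx
      refine ⟨Polynomial.C a * P1, Polynomial.C ((starRingEnd ℂ) a) * P2, fun θ => ?_⟩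
      simp only [ContinuousMap.smul_apply, h1, Polynomial.eval_mul, Polynomial.eval_C, map_mul,
        smul_eq_mul, Complex.conj_conj]
      ring
  let S : C(AddCircle (2 * Real.pi), ℂ) :=
    ⟨fun t => ((s (AddCircle.toCircle t : ℂ) + 1 / 2 : ℝ) : ℂ), by
      refine Complex.continuous_ofReal.comp (Continuous.add ?_ continuous_const)
      refine hs.comp_continuous (continuous_subtype_val.comp AddCircle.continuous_toCircle) ?_
      intro t; rw [mem_sphere_zero_iff_norm]; exact Circle.norm_coe _⟩
  have hS : S ∈ (Submodule.span ℂ (range (@fourier (2 * Real.pi)))).topologicalClosure := by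
    rw [span_fourier_closure_eq_top]; trivial
  obtain ⟨t, ht, htS⟩ := Metric.mem_closure_iff.1 hS (1 / 2) (by norm_num)
  obtain ⟨Q1, Q2, hQ⟩ := hspan t ht
  refine ⟨Q1 + Q2, fun w hw => ?_⟩
  have hw1 : ‖w‖ = 1 := by simpa using hw
  obtain ⟨θ, rfl⟩ : ∃ θ : ℝ, Complex.exp (θ * I) = w := by
    refine ⟨Complex.arg w, ?_⟩
    have := Complex.norm_mul_exp_arg_mul_I w
    rwa [hw1, ofReal_one, one_mul] at this
  have h1 : ‖S (θ : AddCircle (2 * Real.pi)) - t θ‖ ≤ 1 / 2 := by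
    have := (ContinuousMap.norm_coe_le_norm (S - t) (θ : AddCircle (2 * Real.pi)))
    rw [dist_eq_norm] at htS
    exact this.trans htS.le
  have h2 : S (θ : AddCircle (2 * Real.pi)) = ((s (Complex.exp (θ * I)) + 1 / 2 : ℝ) : ℂ) := by
    simp only [S, ContinuousMap.coe_mk, AddCircle.toCircle_apply_mk, Circle.coe_exp]
    have : 2 * Real.pi / (2 * Real.pi) * θ = θ := by
      rw [div_self Real.two_pi_pos.ne', one_mul]
    rw [this]
  have h3 := (Complex.abs_re_le_norm _).trans h1
  rw [h2, hQ, sub_re, add_re, conj_re, ofReal_re, abs_le] at h3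
  rw [Polynomial.eval_add, add_re]
  constructor <;> linarith [h3.1, h3.2]

/-- A dilate of an `H^p` function has `|f|^{p/2}` majorized by the real part of a polynomial whose
`ℓ²` coefficient norm is controlled by the `H^p` bound alone. -/
lemma dilate_majorant {p : ℝ} (hp : 0 < p) {f : ℂ → ℂ} (hf : DifferentiableOn ℂ f uDisk) {C : ℝ}
    {R : ℝ} (hR : R ∈ Set.Ico (0:ℝ) 1) (hC : circMean p f R ≤ C) :
    ∃ Q : Polynomial ℂ, (∀ z ∈ closedBall (0:ℂ) 1, ‖f (R * z)‖ ^ (p / 2) ≤ (Q.eval z).re) ∧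
      ∀ N, ∑ k ∈ Finset.range N, ‖Q.coeff k‖ ^ 2 ≤ (2 * Real.pi)⁻¹ * (4 * C + 8 * Real.pi) := by
  have hmaps : MapsTo (fun z : ℂ => (R:ℂ) * z) (closedBall 0 1) uDisk := by
    intro z hz
    have hz1 : ‖z‖ ≤ 1 := by simpa using hz
    simp only [uDisk, mem_ball_zero_iff, norm_mul, Complex.norm_real, Real.norm_eq_abs,
      abs_of_nonneg hR.1]
    nlinarith [hR.1, hR.2, norm_nonneg z]
  have hfR : DiffContOnCl ℂ (fun z => f (R * z)) (ball 0 1) := by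
    refine ⟨hf.comp (by fun_prop) (hmaps.mono_left ball_subset_closedBall), ?_⟩
    rw [closure_ball _ one_ne_zero]
    exact hf.continuousOn.comp (by fun_prop) hmaps
  have hsc : ContinuousOn (fun z => ‖f (R * z)‖ ^ (p / 2)) (sphere 0 1) :=
    (hfR.continuousOn_ball.mono sphere_subset_closedBall).norm.rpow_const
      (fun _ _ => Or.inr (by positivity))
  obtain ⟨Q0, hQ0⟩ := exists_poly_re hsc
  set Q : Polynomial ℂ := Q0 - Polynomial.C (((Q0.eval 0).im : ℂ) * I) with hQdef
  have hQre : ∀ z, (Q.eval z).re = (Q0.eval z).re := fun z => by simp [hQdef]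
  have hQim : (Q.eval 0).im = 0 := by simp [hQdef]
  refine ⟨Q, ?_, fun N => ?_⟩
  · refine rpow_norm_le_re (f := fun z => f (R * z)) (Q := fun z => Q.eval z) (by positivity) hfR
      Q.differentiable.diffContOnCl fun z hz => ?_
    rw [hQre]
    exact (hQ0 z hz).1
  have hfc := circ_cont hf.continuousOn hR
  have hsq : ∫ θ in (0:ℝ)..(2 * Real.pi), ‖Q.eval (Complex.exp (θ * I))‖ ^ 2
      ≤ 4 * C + 8 * Real.pi := by
    have hm := circ_mean_re (f := fun z => Q.eval z ^ 2) (r := 1) zero_le_one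
      (Q.differentiable.pow 2).diffContOnCl
    simp only [ofReal_one, one_mul] at hm
    have h0 : 0 ≤ ((Q.eval 0) ^ 2).re := by
      rw [sq, mul_re, hQim]; nlinarith [sq_nonneg (Q.eval 0).re]
    have hle : ∀ θ : ℝ, ‖Q.eval (Complex.exp (θ * I))‖ ^ 2 ≤
        (4 * ‖f (R * Complex.exp (θ * I))‖ ^ p + 4) - (Q.eval (Complex.exp (θ * I)) ^ 2).re := by
      intro θ
      have hmem : Complex.exp (θ * I) ∈ sphere (0:ℂ) 1 := by simp [Complex.norm_exp_ofReal_mul_I]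
      have hb := hQ0 _ hmem
      rw [← hQre] at hb
      set x := Q.eval (Complex.exp (θ * I))
      have h1 : ‖x‖ ^ 2 = 2 * x.re ^ 2 - (x ^ 2).re := by
        rw [← Complex.normSq_eq_norm_sq, Complex.normSq_apply, sq x, mul_re]; ring
      have h2 : ‖f (R * Complex.exp (θ * I))‖ ^ p = (‖f (R * Complex.exp (θ * I))‖ ^ (p / 2)) ^ 2 := by
        rw [← Real.rpow_natCast, ← Real.rpow_mul (norm_nonneg _)]
        congr 1; push_cast; ring
      have h3 : 0 ≤ ‖f (R * Complex.exp (θ * I))‖ ^ (p / 2) := by positivity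
      rw [h1, h2]
      nlinarith [hb.1, hb.2, sq_nonneg (‖f (R * Complex.exp (θ * I))‖ ^ (p / 2) - 1)]
    have hQc : Continuous fun θ : ℝ => Q.eval (Complex.exp (θ * I)) :=
      Q.continuous.comp (by fun_prop)
    have i1 : IntervalIntegrable (fun θ : ℝ => 4 * ‖f (R * Complex.exp (θ * I))‖ ^ p + 4) volume 0
        (2 * Real.pi) :=
      ((continuous_const.mul (hfc.norm.rpow_const fun _ => Or.inr hp.le)).add
        continuous_const).intervalIntegrable _ _
    have i2 : IntervalIntegrable (fun θ : ℝ => (Q.eval (Complex.exp (θ * I)) ^ 2).re) volume 0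
        (2 * Real.pi) := (Complex.continuous_re.comp (hQc.pow 2)).intervalIntegrable _ _
    calc _ ≤ ∫ θ in (0:ℝ)..(2 * Real.pi), ((4 * ‖f (R * Complex.exp (θ * I))‖ ^ p + 4)
          - (Q.eval (Complex.exp (θ * I)) ^ 2).re) :=
          intervalIntegral.integral_mono_on (by positivity)
            ((hQc.norm.pow 2).intervalIntegrable _ _) (i1.sub i2) fun θ _ => hle θ
      _ = 4 * circMean p f R + 8 * Real.pi - 2 * Real.pi * ((Q.eval 0) ^ 2).re := by
          rw [intervalIntegral.integral_sub i1 i2, hm, intervalIntegral.integral_add,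
            intervalIntegral.integral_const_mul]
          · simp only [circMean, intervalIntegral.integral_const, sub_zero, smul_eq_mul]; ring
          · exact (continuous_const.mul
              (hfc.norm.rpow_const fun _ => Or.inr hp.le)).intervalIntegrable _ _
          · exact intervalIntegrable_const
      _ ≤ 4 * C + 8 * Real.pi := by
          have : 0 ≤ 2 * Real.pi * ((Q.eval 0) ^ 2).re := by positivity
          linarith
  have hp2 := parseval_fin Q.coeff (max N (Q.natDegree + 1))
  have he : ∀ w : ℂ, ∑ k ∈ Finset.range (max N (Q.natDegree + 1)), Q.coeff k * w ^ k = Q.eval w :=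
    fun w => (Polynomial.eval_eq_sum_range' (by simp) w).symm
  simp only [he] at hp2
  rw [hp2] at hsq
  rw [inv_mul_eq_div, le_div_iff₀ (by positivity), mul_comm]
  refine le_trans ?_ hsq
  gcongr
  exact le_max_left _ _

/-- A function `f ∈ H^p` satisfies `|f|^{p/2} ≤ Re W` for some `W ∈ H²`; `W` is a limit, along an
ultrafilter, of the majorants of the dilates of `f`. -/
lemma exists_majorant {p : ℝ} (hp : 0 < p) {f : ℂ → ℂ} (hf : MemHp p f) :
    ∃ (c : ℕ → ℂ) (C : ℝ), (∀ N, ∑ k ∈ Finset.range N, ‖c k‖ ^ 2 ≤ C) ∧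
      ∀ z ∈ uDisk, ‖f z‖ ^ (p / 2) ≤ (∑' k, c k * z ^ k).re := by
  obtain ⟨hfd, C0, hC0⟩ := hf
  set R : ℕ → ℝ := fun j => 1 - 1 / ((j:ℝ) + 1) with hRdef
  have hR : ∀ j, R j ∈ Set.Ico (0:ℝ) 1 := by
    intro j
    have h1 : (0:ℝ) < (j:ℝ) + 1 := by positivity
    refine ⟨?_, ?_⟩
    · simp only [hRdef, sub_nonneg]
      rw [div_le_one h1]; linarith [(Nat.cast_nonneg j : (0:ℝ) ≤ j)]
    · simp only [hRdef]; linarith [one_div_pos.2 h1]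
  have hRt : Tendsto R atTop (𝓝 1) := by
    have := (tendsto_one_div_add_atTop_nhds_zero_nat (𝕜 := ℝ)).const_sub 1
    simpa [hRdef] using this
  choose Q hQ1 hQ2 using fun j => dilate_majorant hp hfd (hR j) (hC0 (R j) (hR j))
  set C := (2 * Real.pi)⁻¹ * (4 * C0 + 8 * Real.pi) with hC
  let U : Ultrafilter ℕ := Filter.hyperfilter ℕ
  have hU : (U : Filter ℕ) ≤ atTop := by
    rw [← Nat.cofinite_eq_atTop]; exact Filter.hyperfilter_le_cofinite
  have hlim : ∀ k, ∃ c : ℂ, Tendsto (fun j => (Q j).coeff k) U (𝓝 c) := by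
    intro k
    obtain ⟨c, -, hc⟩ := (isCompact_closedBall (0:ℂ) (C + 1)).ultrafilter_le_nhds
      (U.map fun j => (Q j).coeff k) (by
        simp only [Ultrafilter.coe_map, le_principal_iff, mem_map]
        exact Eventually.of_forall fun j => by simpa using coeff_bdd (hQ2 j) k)
    exact ⟨c, hc⟩
  choose c hc using hlim
  refine ⟨c, C, fun N => ?_, fun z hz => ?_⟩
  · exact le_of_tendsto (tendsto_finsetSum _ fun k _ => ((hc k).norm.pow 2))
      (Eventually.of_forall fun j => hQ2 j N)
  · have hz1 : ‖z‖ < 1 := by simpa [uDisk] using hz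
    have ht : Tendsto (fun j => ∑' k, (Q j).coeff k * z ^ k) U (𝓝 (∑' k, c k * z ^ k)) := by
      refine tendsto_tsum_of_dominated_convergence (bound := fun k => (C + 1) * ‖z‖ ^ k)
        ((summable_geometric_of_lt_one (norm_nonneg _) hz1).mul_left _)
        (fun k => (hc k).mul_const _) (Eventually.of_forall fun j k => ?_)
      rw [norm_mul, norm_pow]
      have := coeff_bdd (hQ2 j) k
      gcongr
    have heval : ∀ j, ∑' k, (Q j).coeff k * z ^ k = (Q j).eval z := by
      intro j
      rw [Polynomial.eval_eq_sum_range]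
      refine tsum_eq_sum fun k hk => ?_
      rw [Polynomial.coeff_eq_zero_of_natDegree_lt (by simp at hk; omega), zero_mul]
    simp only [heval] at ht
    have hl : Tendsto (fun j => ‖f (R j * z)‖ ^ (p / 2)) U (𝓝 (‖f z‖ ^ (p / 2))) := by
      have h1 : Tendsto (fun j => ((R j : ℝ) : ℂ) * z) atTop (𝓝 z) := by
        have := ((Complex.continuous_ofReal.tendsto 1).comp hRt).mul_const z
        simpa using this
      have h2 : ContinuousAt f z := (hfd.differentiableAt (isOpen_ball.mem_nhds hz)).continuousAt
      exact (((h2.tendsto.comp h1).norm).rpow_const (Or.inr (by positivity))).mono_left hU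
    exact le_of_tendsto_of_tendsto hl ((Complex.continuous_re.tendsto _).comp ht)
      (Eventually.of_forall fun j => hQ1 j z (ball_subset_closedBall hz))

/-! ### Integral means and density of bounded functions -/

lemma circMean_nonneg (p : ℝ) (f : ℂ → ℂ) (r : ℝ) : 0 ≤ circMean p f r :=
  intervalIntegral.integral_nonneg (by positivity) fun _ _ => by positivity

lemma circMean_integrable {p : ℝ} (hp : 0 < p) {f : ℂ → ℂ} (hf : ContinuousOn f uDisk) {r : ℝ}
    (hr : r ∈ Set.Ico (0:ℝ) 1) : IntervalIntegrable
      (fun θ : ℝ => ‖f ((r : ℂ) * Complex.exp ((θ : ℂ) * Complex.I))‖ ^ p) volume 0 (2 * Real.pi) :=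
  ((circ_cont hf hr).norm.rpow_const fun _ => Or.inr hp.le).intervalIntegrable _ _

lemma circMean_mono {p : ℝ} (hp : 0 < p) {f g : ℂ → ℂ} (hf : ContinuousOn f uDisk)
    (hg : ContinuousOn g uDisk) (h : ∀ z ∈ uDisk, ‖f z‖ ≤ ‖g z‖) {r : ℝ}
    (hr : r ∈ Set.Ico (0:ℝ) 1) : circMean p f r ≤ circMean p g r :=
  intervalIntegral.integral_mono_on (by positivity) (circMean_integrable hp hf hr)
    (circMean_integrable hp hg hr) fun θ _ =>
    Real.rpow_le_rpow (norm_nonneg _) (h _ (circ_mem hr θ)) hp.le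

lemma circMean_congr (p : ℝ) {f g : ℂ → ℂ} (h : ∀ z ∈ uDisk, f z = g z) {r : ℝ}
    (hr : r ∈ Set.Ico (0:ℝ) 1) : circMean p f r = circMean p g r :=
  intervalIntegral.integral_congr fun θ _ => by simp only [h _ (circ_mem hr θ)]

lemma circMean_mul_le {p : ℝ} (hp : 0 < p) {m f : ℂ → ℂ} (hm : ContinuousOn m uDisk)
    (hf : ContinuousOn f uDisk) {K : ℝ} (hK : ∀ z ∈ uDisk, ‖m z‖ ≤ K) {r : ℝ}
    (hr : r ∈ Set.Ico (0:ℝ) 1) : circMean p (fun z => m z * f z) r ≤ K ^ p * circMean p f r := by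
  unfold circMean
  rw [← intervalIntegral.integral_const_mul]
  refine intervalIntegral.integral_mono_on (by positivity)
    (circMean_integrable hp (hm.mul hf) hr)
    ((circMean_integrable hp hf hr).const_mul _) fun θ _ => ?_
  rw [norm_mul, Real.mul_rpow (norm_nonneg _) (norm_nonneg _)]
  have := Real.rpow_le_rpow (norm_nonneg _) (hK _ (circ_mem hr θ)) hp.le
  gcongr

lemma add_rpow_le_two {p x y : ℝ} (hp : 0 < p) (hx : 0 ≤ x) (hy : 0 ≤ y) :
    (x + y) ^ p ≤ 2 ^ p * (x ^ p + y ^ p) := by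
  have h1 : x + y ≤ 2 * max x y := by linarith [le_max_left x y, le_max_right x y]
  refine (Real.rpow_le_rpow (by positivity) h1 hp.le).trans ?_
  rw [Real.mul_rpow (by norm_num) (by positivity)]
  have hxp : 0 ≤ x ^ p := by positivity
  have hyp : 0 ≤ y ^ p := by positivity
  gcongr
  rcases max_choice x y with h | h <;> rw [h] <;> linarith

lemma circMean_add_le {p : ℝ} (hp : 0 < p) {f g : ℂ → ℂ} (hf : ContinuousOn f uDisk)
    (hg : ContinuousOn g uDisk) {r : ℝ} (hr : r ∈ Set.Ico (0:ℝ) 1) :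
    circMean p (fun z => f z + g z) r ≤ 2 ^ p * (circMean p f r + circMean p g r) := by
  unfold circMean
  rw [← intervalIntegral.integral_add (circMean_integrable hp hf hr) (circMean_integrable hp hg hr),
    ← intervalIntegral.integral_const_mul]
  refine intervalIntegral.integral_mono_on (by positivity)
    (circMean_integrable hp (hf.add hg) hr)
    (((circMean_integrable hp hf hr).add (circMean_integrable hp hg hr)).const_mul _) fun θ _ => ?_
  exact (Real.rpow_le_rpow (norm_nonneg _) (norm_add_le _ _) hp.le).trans
    (add_rpow_le_two hp (norm_nonneg _) (norm_nonneg _))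

/-- On uniformly bounded functions, smallness of the quadratic means implies smallness of all
`p`-th means, since `x^p ≤ δ^p + K^p x²/δ²` for `0 ≤ x ≤ K`. -/
lemma two_to_p {p : ℝ} (hp : 0 < p) {K ε : ℝ} (hK : 0 ≤ K) (hε : 0 < ε) :
    ∃ η > 0, ∀ F : ℂ → ℂ, ContinuousOn F uDisk → (∀ z ∈ uDisk, ‖F z‖ ≤ K) →
      ∀ r ∈ Set.Ico (0:ℝ) 1, circMean 2 F r ≤ η → circMean p F r ≤ ε := by
  have hpi := Real.pi_pos
  set δ : ℝ := (ε / (4 * Real.pi)) ^ (1 / p) with hδdef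
  have hδ : 0 < δ := by positivity
  have hδp : δ ^ p = ε / (4 * Real.pi) := by
    rw [hδdef, ← Real.rpow_mul (by positivity), one_div_mul_cancel hp.ne', Real.rpow_one]
  refine ⟨ε * δ ^ 2 / (2 * (K ^ p + 1)), by positivity, fun F hF hFK r hr h2 => ?_⟩
  have hpt : ∀ x : ℝ, 0 ≤ x → x ≤ K → x ^ p ≤ δ ^ p + K ^ p / δ ^ 2 * x ^ (2:ℝ) := by
    intro x hx hxK
    rw [Real.rpow_two]
    by_cases h : x ≤ δ
    · have := Real.rpow_le_rpow hx h hp.le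
      have : 0 ≤ K ^ p / δ ^ 2 * x ^ 2 := by positivity
      linarith
    · have h1 : x ^ p ≤ K ^ p := Real.rpow_le_rpow hx hxK hp.le
      have h2 : 1 ≤ x ^ 2 / δ ^ 2 := by
        rw [one_le_div (by positivity)]; nlinarith [not_le.1 h]
      have h3 : K ^ p / δ ^ 2 * x ^ 2 = K ^ p * (x ^ 2 / δ ^ 2) := by ring
      have h4 : 0 ≤ δ ^ p := by positivity
      have h5 : 0 ≤ K ^ p := by positivity
      rw [h3]
      nlinarith
  have h3 : circMean p F r ≤ 2 * Real.pi * δ ^ p + K ^ p / δ ^ 2 * circMean 2 F r := by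
    have e : 2 * Real.pi * δ ^ p + K ^ p / δ ^ 2 * circMean 2 F r = ∫ θ in (0:ℝ)..(2 * Real.pi),
        (δ ^ p + K ^ p / δ ^ 2 * ‖F ((r : ℂ) * Complex.exp ((θ : ℂ) * Complex.I))‖ ^ (2:ℝ)) := by
      rw [intervalIntegral.integral_add intervalIntegrable_const
        ((circMean_integrable two_pos hF hr).const_mul _), intervalIntegral.integral_const_mul]
      simp [circMean]
    rw [e]
    exact intervalIntegral.integral_mono_on (by positivity) (circMean_integrable hp hF hr)
      (intervalIntegrable_const.add ((circMean_integrable two_pos hF hr).const_mul _))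
      fun θ _ => hpt _ (norm_nonneg _) (hFK _ (circ_mem hr θ))
  have h4 : K ^ p / δ ^ 2 * circMean 2 F r ≤ ε / 2 := by
    have hKp : 0 ≤ K ^ p := by positivity
    calc _ ≤ K ^ p / δ ^ 2 * (ε * δ ^ 2 / (2 * (K ^ p + 1))) := by gcongr
      _ = ε / 2 * (K ^ p / (K ^ p + 1)) := by field_simp
      _ ≤ ε / 2 * 1 := by
          gcongr
          rw [div_le_one (by positivity)]; linarith
      _ = ε / 2 := mul_one _
  have h5 : 2 * Real.pi * δ ^ p = ε / 2 := by rw [hδp]; field_simp; norm_num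
  linarith

lemma norm_one_sub_pow_le' {x : ℂ} (hx : ‖x‖ ≤ 1) (N : ℕ) : ‖1 - x ^ N‖ ≤ N * ‖1 - x‖ := by
  rw [← mul_neg_geom_sum x N, norm_mul, mul_comm]
  gcongr
  refine (norm_sum_le _ _).trans ?_
  calc _ ≤ ∑ _i ∈ Finset.range N, (1:ℝ) := Finset.sum_le_sum fun i _ => by
        rw [norm_pow]; exact pow_le_one₀ (norm_nonneg _) hx
    _ = N := by simp

/-- Density of `H^∞` in `H^p`. With `|f|^{p/2} ≤ Re W`, `W ∈ H²`, the functions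
`f · (k/(k+W))^N` are bounded for `N ≥ 2/p`, and they tend to `f` because
`|f|^p ≤ |W|²` and `W` is close in `H²` to a bounded function. -/
lemma hinf_dense {p : ℝ} (hp : 0 < p) {f : ℂ → ℂ} (hf : MemHp p f) {ε : ℝ} (hε : 0 < ε) :
    ∃ f0 : ℂ → ℂ, MemHinf f0 ∧ ∀ r ∈ Set.Ico (0:ℝ) 1, circMean p (fun z => f z - f0 z) r ≤ ε := by
  obtain ⟨c, C, hC, hmaj⟩ := exists_majorant hp hf
  set W : ℂ → ℂ := fun z => ∑' k, c k * z ^ k with hW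
  have hWd : DifferentiableOn ℂ W uDisk := powser_diff (coeff_bdd hC)
  have hWre : ∀ z ∈ uDisk, 0 ≤ (W z).re := fun z hz =>
    (Real.rpow_nonneg (norm_nonneg _) _).trans (hmaj z hz)
  have hid : DifferentiableOn ℂ (fun z : ℂ => z) uDisk := differentiableOn_id
  have hW2 : ∀ r ∈ Set.Ico (0:ℝ) 1, circMean 2 W r ≤ 2 * Real.pi * C := fun r hr =>
    littlewood hC (φ := fun z => z) hid (mapsTo_id _) rfl hr
  have hpi := Real.pi_pos
  have hC0 : 0 ≤ C := by simpa using hC 0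
  have h2p : (0:ℝ) < 2 ^ p := by positivity
  -- tail of the power series of `W`, small in `H²`
  set ε1 : ℝ := ε / (16 * Real.pi * 2 ^ p) with hε1
  have hε1p : 0 < ε1 := by positivity
  have hs2 : Summable fun k => ‖c k‖ ^ 2 := summable_of_sum_range_le (fun k => by positivity) hC
  obtain ⟨d, hd⟩ := ((tendsto_sum_nat_add fun k => ‖c k‖ ^ 2).eventually
    (gt_mem_nhds hε1p)).exists
  set V : ℂ → ℂ := fun z => ∑ k ∈ Finset.range d, c k * z ^ k with hV
  set T : ℂ → ℂ := fun z => ∑' k, (if k < d then 0 else c k) * z ^ k with hT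
  have hTC : ∀ N, ∑ k ∈ Finset.range N, ‖(if k < d then 0 else c k)‖ ^ 2 ≤ ε1 := by
    intro N
    have hmono : ∑ k ∈ Finset.range N, ‖(if k < d then 0 else c k)‖ ^ 2
        ≤ ∑ k ∈ Finset.range (d + N), ‖(if k < d then 0 else c k)‖ ^ 2 :=
      Finset.sum_le_sum_of_subset_of_nonneg
        (Finset.range_mono (by omega)) (fun _ _ _ => by positivity)
    refine hmono.trans ?_
    rw [Finset.sum_range_add, Finset.sum_eq_zero
      (fun k hk => by rw [if_pos (Finset.mem_range.1 hk)]; simp), zero_add]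
    have : ∀ k, (if d + k < d then 0 else c (d + k)) = c (k + d) := fun k => by simp [add_comm]
    simp only [this]
    exact (((summable_nat_add_iff d).2 hs2).sum_le_tsum _ (fun k _ => by positivity)).trans hd.le
  have hTd : DifferentiableOn ℂ T uDisk := powser_diff (coeff_bdd hTC)
  have hT2 : ∀ r ∈ Set.Ico (0:ℝ) 1, circMean 2 T r ≤ 2 * Real.pi * ε1 := fun r hr =>
    littlewood hTC (φ := fun z => z) hid (mapsTo_id _) rfl hr
  have hWVT : ∀ z ∈ uDisk, W z = V z + T z := by
    intro z hz
    have hz1 : ‖z‖ < 1 := by simpa [uDisk] using hz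
    have hs : Summable fun k => c k * z ^ k := by
      refine Summable.of_norm ?_
      simpa [norm_mul, norm_pow] using coeff_summable (coeff_bdd hC) (norm_nonneg z) hz1
    have hs' : Summable fun k => (if k < d then 0 else c k) * z ^ k := by
      refine Summable.of_norm ?_
      simpa only [norm_mul, norm_pow] using coeff_summable (coeff_bdd hTC) (norm_nonneg z) hz1
    simp only [hW, hV, hT]
    rw [← hs.sum_add_tsum_nat_add d, ← hs'.sum_add_tsum_nat_add d, Finset.sum_eq_zero
      (s := Finset.range d) (f := fun k => (if k < d then 0 else c k) * z ^ k)
      (fun k hk => by rw [if_pos (Finset.mem_range.1 hk), zero_mul]), zero_add]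
    simp
  set K : ℝ := ∑ k ∈ Finset.range d, ‖c k‖ with hK
  have hVK : ∀ z ∈ uDisk, ‖V z‖ ≤ K := by
    intro z hz
    have hz1 : ‖z‖ < 1 := by simpa [uDisk] using hz
    refine (norm_sum_le _ _).trans (Finset.sum_le_sum fun k _ => ?_)
    rw [norm_mul, norm_pow]
    exact mul_le_of_le_one_right (norm_nonneg _) (pow_le_one₀ (norm_nonneg _) hz1.le)
  have hK0 : 0 ≤ K := Finset.sum_nonneg fun _ _ => norm_nonneg _
  obtain ⟨N, hN⟩ := exists_nat_ge (2 / p)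
  obtain ⟨η, hη, hηp⟩ := two_to_p hp (K := 2) (ε := ε / (4 * (K ^ 2 + 1))) two_pos.le (by positivity)
  -- the truncation level
  obtain ⟨k, hk⟩ := exists_nat_ge (max 1 ((N:ℝ) ^ 2 * (2 * Real.pi * C) / η))
  have hk1 : (1:ℝ) ≤ k := (le_max_left _ _).trans hk
  have hkη : (N:ℝ) ^ 2 * (2 * Real.pi * C) / η ≤ k := (le_max_right _ _).trans hk
  have hden : ∀ z ∈ uDisk, (k:ℝ) + (W z).re ≤ ‖(k:ℂ) + W z‖ := fun z _ => by
    have := Complex.re_le_norm ((k:ℂ) + W z)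
    simpa using this
  have hdenpos : ∀ z ∈ uDisk, 0 < ‖(k:ℂ) + W z‖ := fun z hz =>
    lt_of_lt_of_le (by linarith [hWre z hz]) (hden z hz)
  have hne : ∀ z ∈ uDisk, (k:ℂ) + W z ≠ 0 := fun z hz => norm_pos_iff.1 (hdenpos z hz)
  set x : ℂ → ℂ := fun z => (k:ℂ) / ((k:ℂ) + W z) with hx
  have hxd : DifferentiableOn ℂ x uDisk :=
    (differentiableOn_const _).div ((differentiableOn_const _).add hWd) hne
  have hxn : ∀ z ∈ uDisk, ‖x z‖ = k / ‖(k:ℂ) + W z‖ := fun z hz => by simp [hx]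
  have hx1 : ∀ z ∈ uDisk, ‖x z‖ ≤ 1 := fun z hz => by
    rw [hxn z hz, div_le_one (hdenpos z hz)]
    linarith [hden z hz, hWre z hz]
  set G : ℂ → ℂ := fun z => 1 - x z ^ N with hG
  have hGd : DifferentiableOn ℂ G uDisk := (differentiableOn_const _).sub (hxd.pow N)
  have hG2 : ∀ z ∈ uDisk, ‖G z‖ ≤ 2 := fun z hz => by
    refine (norm_sub_le _ _).trans ?_
    rw [norm_one, norm_pow]
    linarith [pow_le_one₀ (norm_nonneg _) (hx1 z hz) (n := N)]
  have hGW : ∀ z ∈ uDisk, ‖G z‖ ≤ ‖((N:ℂ) / k) * W z‖ := fun z hz => by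
    refine (norm_one_sub_pow_le' (hx1 z hz) N).trans ?_
    have h1 : 1 - x z = W z / ((k:ℂ) + W z) := by
      simp only [hx]; field_simp [hne z hz]; ring
    rw [h1, norm_div, norm_mul, norm_div, Complex.norm_natCast, Complex.norm_natCast,
      div_mul_eq_mul_div, ← mul_div_assoc]
    gcongr
    linarith [hden z hz, hWre z hz]
  have hGη : ∀ r ∈ Set.Ico (0:ℝ) 1, circMean 2 G r ≤ η := by
    intro r hr
    have h1 := (circMean_mono two_pos hGd.continuousOn
      (continuousOn_const.mul hWd.continuousOn) hGW hr).trans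
      (circMean_mul_le two_pos continuousOn_const hWd.continuousOn (K := (N:ℝ) / k)
      (fun z _ => by simp) hr)
    refine h1.trans ?_
    rw [Real.rpow_two, div_pow]
    rw [div_le_iff₀ hη] at hkη
    have hk2 : (k:ℝ) ≤ (k:ℝ) ^ 2 := by nlinarith
    calc (N:ℝ) ^ 2 / (k:ℝ) ^ 2 * circMean 2 W r ≤ (N:ℝ) ^ 2 / (k:ℝ) ^ 2 * (2 * Real.pi * C) := by
          gcongr; exact hW2 r hr
      _ = (N:ℝ) ^ 2 * (2 * Real.pi * C) / (k:ℝ) ^ 2 := by ring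
      _ ≤ η := by
          rw [div_le_iff₀ (by positivity)]
          nlinarith
  refine ⟨fun z => f z * x z ^ N, ⟨hf.1.mul (hxd.pow N), (k:ℝ) ^ N, fun z hz => ?_⟩, fun r hr => ?_⟩
  · rw [norm_mul, norm_pow, hxn z hz, div_pow]
    have h1 : ‖f z‖ ≤ ‖(k:ℂ) + W z‖ ^ N := by
      have h1 : ‖f z‖ = (‖f z‖ ^ (p / 2)) ^ (2 / p) := by
        rw [← Real.rpow_mul (norm_nonneg _)]
        rw [show p / 2 * (2 / p) = 1 by field_simp, Real.rpow_one]
      rw [h1, ← Real.rpow_natCast]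
      have h2 : ‖f z‖ ^ (p / 2) ≤ ‖(k:ℂ) + W z‖ := (hmaj z hz).trans (by linarith [hden z hz])
      refine (Real.rpow_le_rpow (by positivity) h2 (by positivity)).trans ?_
      exact Real.rpow_le_rpow_of_exponent_le (by linarith [hden z hz, hWre z hz]) hN
    have h3 : 0 < ‖(k:ℂ) + W z‖ ^ N := pow_pos (hdenpos z hz) N
    rw [← mul_div_assoc, div_le_iff₀ h3, mul_comm]
    gcongr
  · have hfG : ∀ z ∈ uDisk, f z - f z * x z ^ N = f z * G z := fun z _ => by simp only [hG]; ring
    rw [circMean_congr p hfG hr]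
    have hpt : ∀ z ∈ uDisk, ‖f z * G z‖ ^ p ≤ 2 * K ^ 2 * ‖G z‖ ^ p + 2 * 2 ^ p * ‖T z‖ ^ (2:ℝ) := by
      intro z hz
      rw [norm_mul, Real.mul_rpow (norm_nonneg _) (norm_nonneg _), Real.rpow_two]
      have h1 : ‖f z‖ ^ p ≤ ‖W z‖ ^ 2 := by
        have : ‖f z‖ ^ p = (‖f z‖ ^ (p / 2)) ^ 2 := by
          rw [← Real.rpow_natCast, ← Real.rpow_mul (norm_nonneg _)]
          congr 1; push_cast; ring
        rw [this]
        have := (hmaj z hz).trans (Complex.re_le_norm _)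
        gcongr
      have h2 : ‖W z‖ ^ 2 ≤ 2 * K ^ 2 + 2 * ‖T z‖ ^ 2 := by
        have h3 : ‖W z‖ ≤ K + ‖T z‖ := by
          rw [hWVT z hz]; exact (norm_add_le _ _).trans (by linarith [hVK z hz])
        nlinarith [norm_nonneg (W z), norm_nonneg (T z), sq_nonneg (K - ‖T z‖)]
      have h4 : ‖G z‖ ^ p ≤ 2 ^ p := Real.rpow_le_rpow (norm_nonneg _) (hG2 z hz) hp.le
      have h5 : 0 ≤ ‖G z‖ ^ p := by positivity
      calc ‖f z‖ ^ p * ‖G z‖ ^ p ≤ (2 * K ^ 2 + 2 * ‖T z‖ ^ 2) * ‖G z‖ ^ p := by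
            gcongr; exact h1.trans h2
        _ = 2 * K ^ 2 * ‖G z‖ ^ p + 2 * ‖T z‖ ^ 2 * ‖G z‖ ^ p := by ring
        _ ≤ 2 * K ^ 2 * ‖G z‖ ^ p + 2 * ‖T z‖ ^ 2 * 2 ^ p := by gcongr
        _ = _ := by ring
    have h6 : circMean p (fun z => f z * G z) r
        ≤ 2 * K ^ 2 * circMean p G r + 2 * 2 ^ p * circMean 2 T r := by
      unfold circMean
      have iG := (circMean_integrable hp hGd.continuousOn hr).const_mul (2 * K ^ 2)
      have iT := (circMean_integrable two_pos hTd.continuousOn hr).const_mul (2 * 2 ^ p)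
      rw [← intervalIntegral.integral_const_mul, ← intervalIntegral.integral_const_mul,
        ← intervalIntegral.integral_add iG iT]
      exact intervalIntegral.integral_mono_on (by positivity)
        (circMean_integrable hp (hf.1.mul hGd).continuousOn hr) (iG.add iT)
        fun θ _ => hpt _ (circ_mem hr θ)
    have h7 := hηp G hGd.continuousOn hG2 r hr (hGη r hr)
    have h8 : 2 * K ^ 2 * circMean p G r ≤ ε / 2 := by
      calc _ ≤ 2 * K ^ 2 * (ε / (4 * (K ^ 2 + 1))) := by gcongr
        _ = ε / 2 * (K ^ 2 / (K ^ 2 + 1)) := by field_simp; ring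
        _ ≤ ε / 2 * 1 := by
            gcongr
            rw [div_le_one (by positivity)]; linarith
        _ = ε / 2 := mul_one _
    have h9 : 2 * 2 ^ p * circMean 2 T r ≤ ε / 4 := by
      calc _ ≤ 2 * 2 ^ p * (2 * Real.pi * ε1) := by gcongr; exact hT2 r hr
        _ = ε / 4 := by rw [hε1]; field_simp; norm_num
    linarith

/-! ### The algebra of bounded limits -/

lemma algGen2_add {F G u v : ℂ → ℂ} (hu : u ∈ algGen2 F G) (hv : v ∈ algGen2 F G) :
    (fun z => u z + v z) ∈ algGen2 F G := by
  obtain ⟨P, hP⟩ := hu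
  obtain ⟨Q, hQ⟩ := hv
  exact ⟨P + Q, fun z => by simp [hP, hQ]⟩

lemma algGen2_mul {F G u v : ℂ → ℂ} (hu : u ∈ algGen2 F G) (hv : v ∈ algGen2 F G) :
    (fun z => u z * v z) ∈ algGen2 F G := by
  obtain ⟨P, hP⟩ := hu
  obtain ⟨Q, hQ⟩ := hv
  exact ⟨P * Q, fun z => by simp [hP, hQ]⟩

/-- `F` is a bounded limit of `ℂ[B,g]`: it is holomorphic and bounded on the disk, and it can be
approximated in quadratic mean by elements of `ℂ[B,g]` satisfying one common bound. -/
def IsGood (B g F : ℂ → ℂ) : Prop :=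
  DifferentiableOn ℂ F uDisk ∧ ∃ K : ℝ, (∀ z ∈ uDisk, ‖F z‖ ≤ K) ∧ ∀ ε > 0,
    ∃ u ∈ algGen2 B g, ContinuousOn u uDisk ∧ (∀ z ∈ uDisk, ‖u z‖ ≤ K) ∧
      ∀ r ∈ Set.Ico (0:ℝ) 1, circMean 2 (fun z => F z - u z) r ≤ ε

lemma circMean_zero {p : ℝ} (hp : 0 < p) {f : ℂ → ℂ} (h : ∀ z ∈ uDisk, f z = 0) {r : ℝ}
    (hr : r ∈ Set.Ico (0:ℝ) 1) : circMean p f r = 0 := by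
  rw [circMean_congr p (g := fun _ => 0) h hr]
  simp [circMean, Real.zero_rpow hp.ne']

lemma isGood_congr {B g F G : ℂ → ℂ} (hF : IsGood B g F) (h : ∀ z ∈ uDisk, G z = F z) :
    IsGood B g G := by
  obtain ⟨hd, K, hK, H⟩ := hF
  refine ⟨hd.congr h, K, fun z hz => by rw [h z hz]; exact hK z hz, fun ε hε => ?_⟩
  obtain ⟨u, hu, huc, huK, hu2⟩ := H ε hε
  refine ⟨u, hu, huc, huK, fun r hr => ?_⟩
  rw [circMean_congr 2 (g := fun z => F z - u z) (fun z hz => by simp only [h z hz]) hr]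
  exact hu2 r hr

lemma isGood_of_mem {B g F : ℂ → ℂ} (hF : MemHinf F) (hm : F ∈ algGen2 B g) : IsGood B g F := by
  obtain ⟨hd, K, hK⟩ := hF
  refine ⟨hd, K, hK, fun ε hε => ⟨F, hm, hd.continuousOn, hK, fun r hr => ?_⟩⟩
  rw [circMean_zero two_pos (fun z _ => sub_self _) hr]
  exact hε.le

lemma isGood_const (B g : ℂ → ℂ) (c : ℂ) : IsGood B g (fun _ => c) :=
  isGood_of_mem ⟨differentiableOn_const _, ‖c‖, fun _ _ => le_rfl⟩ ⟨MvPolynomial.C c, by simp⟩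

lemma isGood_add {B g F G : ℂ → ℂ} (hF : IsGood B g F) (hG : IsGood B g G) :
    IsGood B g (F + G) := by
  obtain ⟨hFd, K, hFK, HF⟩ := hF
  obtain ⟨hGd, L, hGL, HG⟩ := hG
  refine ⟨hFd.add hGd, K + L, fun z hz => (norm_add_le _ _).trans (add_le_add (hFK z hz) (hGL z hz)),
    fun ε hε => ?_⟩
  obtain ⟨u, hu, huc, huK, hu2⟩ := HF (ε / 8) (by positivity)
  obtain ⟨v, hv, hvc, hvK, hv2⟩ := HG (ε / 8) (by positivity)
  refine ⟨_, algGen2_add hu hv, huc.add hvc,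
    fun z hz => (norm_add_le _ _).trans (add_le_add (huK z hz) (hvK z hz)), fun r hr => ?_⟩
  have h1 := circMean_add_le two_pos (hFd.continuousOn.sub huc) (hGd.continuousOn.sub hvc) hr
  rw [circMean_congr 2 (g := fun z => (F - u) z + (G - v) z)
    (fun z _ => by simp only [Pi.add_apply, Pi.sub_apply]; ring) hr]
  have h2 := hu2 r hr
  have h3 := hv2 r hr
  norm_num at h1
  change _ ≤ 4 * (circMean 2 (fun z => F z - u z) r + circMean 2 (fun z => G z - v z) r) at h1
  simp only [Pi.sub_apply]
  linarith

lemma isGood_mul {B g F G : ℂ → ℂ} (hF : IsGood B g F) (hG : IsGood B g G) :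
    IsGood B g (F * G) := by
  obtain ⟨hFd, K, hFK, HF⟩ := hF
  obtain ⟨hGd, L, hGL, HG⟩ := hG
  have h0 : (0:ℂ) ∈ uDisk := by simp [uDisk]
  have hK0 : 0 ≤ K := (norm_nonneg _).trans (hFK 0 h0)
  have hL0 : 0 ≤ L := (norm_nonneg _).trans (hGL 0 h0)
  refine ⟨hFd.mul hGd, K * L, fun z hz => ?_, fun ε hε => ?_⟩
  · rw [Pi.mul_apply, norm_mul]; exact mul_le_mul (hFK z hz) (hGL z hz) (norm_nonneg _) hK0
  obtain ⟨u, hu, huc, huK, hu2⟩ := HF (ε / (8 * (L ^ 2 + 1))) (by positivity)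
  obtain ⟨v, hv, hvc, hvK, hv2⟩ := HG (ε / (8 * (K ^ 2 + 1))) (by positivity)
  refine ⟨_, algGen2_mul hu hv, huc.mul hvc, fun z hz => ?_, fun r hr => ?_⟩
  · rw [norm_mul]; exact mul_le_mul (huK z hz) (hvK z hz) (norm_nonneg _) hK0
  have hFu := hFd.continuousOn.sub huc
  have hGv := hGd.continuousOn.sub hvc
  have h1 := circMean_add_le two_pos (hGd.continuousOn.mul hFu) (huc.mul hGv) hr
  have h2 := circMean_mul_le two_pos hGd.continuousOn hFu hGL hr
  have h3 := circMean_mul_le two_pos huc hGv huK hr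
  rw [circMean_congr 2 (g := fun z => G z * (F - u) z + u z * (G - v) z)
    (fun z _ => by simp only [Pi.mul_apply, Pi.sub_apply]; ring) hr]
  have h4 := hu2 r hr
  have h5 := hv2 r hr
  norm_num at h1 h2 h3
  have e1 : L ^ 2 * (ε / (8 * (L ^ 2 + 1))) ≤ ε / 8 := by
    rw [← div_div, mul_div_assoc', div_le_iff₀ (by positivity)]
    nlinarith
  have e2 : K ^ 2 * (ε / (8 * (K ^ 2 + 1))) ≤ ε / 8 := by
    rw [← div_div, mul_div_assoc', div_le_iff₀ (by positivity)]
    nlinarith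
  have h6 : L ^ 2 * circMean 2 (fun z => F z - u z) r ≤ ε / 8 :=
    (mul_le_mul_of_nonneg_left h4 (by positivity)).trans e1
  have h7 : K ^ 2 * circMean 2 (fun z => G z - v z) r ≤ ε / 8 :=
    (mul_le_mul_of_nonneg_left h5 (by positivity)).trans e2
  change circMean 2 (fun z => G z * (F z - u z)) r ≤ L ^ 2 * circMean 2 (fun z => F z - u z) r at h2
  change circMean 2 (fun z => u z * (G z - v z)) r ≤ K ^ 2 * circMean 2 (fun z => G z - v z) r at h3
  change _ ≤ 4 * (circMean 2 (fun z => G z * (F z - u z)) r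
    + circMean 2 (fun z => u z * (G z - v z)) r) at h1
  simp only [Pi.sub_apply]
  linarith

/-- The bounded limits of `ℂ[B,g]` form an algebra. -/
def goodAlg (B g : ℂ → ℂ) : Subalgebra ℂ (ℂ → ℂ) where
  carrier := {F | IsGood B g F}
  mul_mem' := isGood_mul
  add_mem' := isGood_add
  algebraMap_mem' c := isGood_const B g c

lemma good_of_comp {B g c : ℂ → ℂ} (hBd : DifferentiableOn ℂ B uDisk) (hBm : MapsTo B uDisk uDisk)
    (hB0 : B 0 = 0) (hc : MemHinf c) : (fun z => c (B z)) ∈ goodAlg B g := by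
  obtain ⟨hd, K, hK⟩ := hc
  refine ⟨hd.comp hBd hBm, K + 1, fun z hz => (hK _ (hBm hz)).trans (by linarith), fun ε hε => ?_⟩
  have hpi := Real.pi_pos
  obtain ⟨P, hP1, hP2⟩ := hinf_approx hd hK (ε := ε / (2 * Real.pi)) (by positivity)
  refine ⟨fun z => P.eval (B z), ⟨Polynomial.aeval (MvPolynomial.X 0) P, fun z => ?_⟩,
    P.continuous.comp_continuousOn hBd.continuousOn, fun z hz => hP1 _ (hBm hz), fun r hr => ?_⟩
  · rw [← MvPolynomial.coe_aeval_eq_eval, RingHom.coe_coe, ← Polynomial.aeval_algHom_apply]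
    simp
  · have := hP2 B hBd hBm hB0 r hr
    rwa [mul_div_cancel₀ _ (by positivity)] at this

lemma good_self {B g : ℂ → ℂ} (hg : MemHinf g) : g ∈ goodAlg B g :=
  isGood_of_mem hg ⟨MvPolynomial.X 1, by simp⟩

/-- If `Φ` is bounded and `Φ · H^∞` consists of bounded limits of `ℂ[B,g]`, then `Φ · H^p` lies in
the `H^p`-closure of `ℂ[B,g]`. -/
lemma mem_closure_of_good {B g Φ h : ℂ → ℂ} (hΦ : MemHinf Φ) {p : ℝ} (hp : 0 < p)
    (hgood : ∀ h0, MemHinf h0 → IsGood B g (fun z => Φ z * h0 z)) (hh : MemHp p h) :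
    (fun z => Φ z * h z) ∈ hpClosure p (algGen2 B g) := by
  obtain ⟨hΦd, M, hM⟩ := hΦ
  have h0 : (0:ℂ) ∈ uDisk := by simp [uDisk]
  have hM0 : 0 ≤ M := (norm_nonneg _).trans (hM 0 h0)
  refine ⟨⟨hΦd.mul hh.1, ?_⟩, ?_⟩
  · obtain ⟨C, hC⟩ := hh.2
    refine ⟨M ^ p * C, fun r hr => (circMean_mul_le hp hΦd.continuousOn hh.1.continuousOn hM hr).trans ?_⟩
    gcongr
    exact hC r hr
  have key : ∀ ε > 0, ∃ u ∈ algGen2 B g, ∀ r ∈ Set.Ico (0:ℝ) 1,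
      circMean p (fun z => Φ z * h z - u z) r ≤ ε := by
    intro ε hε
    have h2p : (0:ℝ) < 2 ^ p := by positivity
    obtain ⟨f0, hf0, hf0'⟩ := hinf_dense hp hh (ε := ε / (2 * 2 ^ p * (M ^ p + 1))) (by positivity)
    obtain ⟨hgd, K, hK, H⟩ := hgood f0 hf0
    have hK0 : 0 ≤ K := (norm_nonneg _).trans (hK 0 h0)
    obtain ⟨η, hη, hη'⟩ := two_to_p hp (K := K + K) (ε := ε / (2 * 2 ^ p)) (by positivity)
      (by positivity)
    obtain ⟨u, hu, huc, huK, hu2⟩ := H η hη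
    refine ⟨u, hu, fun r hr => ?_⟩
    have hc1 := hh.1.continuousOn.sub hf0.1.continuousOn
    have hc2 := hgd.continuousOn.sub huc
    have h1 := circMean_add_le hp (hΦd.continuousOn.mul hc1) hc2 hr
    have h2 := circMean_mul_le hp hΦd.continuousOn hc1 hM hr
    have h3 := hη' _ hc2 (fun z hz => (norm_sub_le _ _).trans (add_le_add (hK z hz) (huK z hz))) r hr
      (hu2 r hr)
    have h4 := hf0' r hr
    rw [circMean_congr p (g := fun z => Φ z * (h - f0) z + (Φ z * f0 z - u z))
      (fun z _ => by simp only [Pi.sub_apply]; ring) hr]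
    refine h1.trans ?_
    have h5 : M ^ p * circMean p (h - f0) r ≤ ε / (2 * 2 ^ p) := by
      refine (mul_le_mul_of_nonneg_left h4 (by positivity)).trans ?_
      have hMp : 0 ≤ M ^ p := by positivity
      rw [← div_div, mul_div_assoc', div_le_iff₀ (by positivity)]
      have : 0 ≤ ε / (2 * 2 ^ p) := by positivity
      nlinarith
    have h6 := add_le_add (h2.trans h5) h3
    refine (mul_le_mul_of_nonneg_left h6 h2p.le).trans (le_of_eq ?_)
    field_simp
    ring
  choose! u hu hur using fun k : ℕ => key (1 / ((k:ℝ) + 1)) (by positivity)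
  refine ⟨u, hu, ?_⟩
  have hlim : Tendsto (fun k : ℕ => (1 / ((k:ℝ) + 1)) ^ (1 / p)) atTop (𝓝 0) := by
    have h1 := tendsto_one_div_add_atTop_nhds_zero_nat (𝕜 := ℝ)
    have h2 := h1.rpow_const (p := 1 / p) (Or.inr (by positivity))
    rwa [Real.zero_rpow (by positivity)] at h2
  refine squeeze_zero (fun k => ?_) (fun k => ?_) hlim
  · refine Real.rpow_nonneg (Real.sSup_nonneg ?_) _
    rintro m ⟨r, -, rfl⟩
    exact circMean_nonneg _ _ _
  · refine Real.rpow_le_rpow (Real.sSup_nonneg ?_) (Real.sSup_le ?_ (by positivity)) (by positivity)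
    · rintro m ⟨r, -, rfl⟩
      exact circMean_nonneg _ _ _
    · rintro m ⟨r, hr, rfl⟩
      exact hur k r hr

/-! ### Blaschke products and their fibres -/

/-- The denominator `∏_j (1 - conj(a_j) X)` of the Blaschke product. -/
def polC {n : ℕ} (a : Fin n → ℂ) : ℂ[X] := ∏ j, (1 - C ((starRingEnd ℂ) (a j)) * X)

/-- The numerator of the Blaschke product, normalised to be monic. -/
def polA {n : ℕ} (a : Fin n → ℂ) : ℂ[X] := ∏ j, (X - C (a j))

/-- The polynomial in `w` whose roots are the solutions of `B(w) = b`, with its sign chosen such that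
it is monic when some `a_j` vanishes. -/
def fibPol {n : ℕ} (a : Fin n → ℂ) (b : ℂ) : ℂ[X] := polA a - C ((-1) ^ n * b) * polC a

section Fibres

variable {n : ℕ} {a : Fin n → ℂ}

lemma polC_eval (a : Fin n → ℂ) (w : ℂ) :
    (polC a).eval w = ∏ j, (1 - (starRingEnd ℂ) (a j) * w) := by
  simp [polC, eval_prod]

lemma polA_eval (a : Fin n → ℂ) (w : ℂ) : (polA a).eval w = ∏ j, (w - a j) := by
  simp [polA, eval_prod]

lemma prod_neg_sub (a : Fin n → ℂ) (w : ℂ) : ∏ j, (a j - w) = (-1) ^ n * ∏ j, (w - a j) := by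
  have : ∀ j, a j - w = (-1) * (w - a j) := fun j => by ring
  simp only [this, Finset.prod_mul_distrib, Finset.prod_const, Finset.card_univ, Fintype.card_fin]

lemma blaschke_eq (a : Fin n → ℂ) (w : ℂ) :
    blaschke a w = (-1) ^ n * (polA a).eval w / (polC a).eval w := by
  rw [blaschke, Finset.prod_div_distrib, polC_eval, polA_eval, prod_neg_sub]

lemma factor_ne {c w : ℂ} (hc : c ∈ uDisk) (hw : ‖w‖ ≤ 1) : 1 - (starRingEnd ℂ) c * w ≠ 0 := by
  intro h
  have h1 : ‖(starRingEnd ℂ) c * w‖ = 1 := by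
    rw [← sub_eq_zero.mp h, norm_one]
  rw [norm_mul, RCLike.norm_conj] at h1
  have hc' : ‖c‖ < 1 := by simpa [uDisk] using hc
  nlinarith [norm_nonneg c, norm_nonneg w]

lemma polC_ne (ha : ∀ j, a j ∈ uDisk) {w : ℂ} (hw : ‖w‖ ≤ 1) : (polC a).eval w ≠ 0 := by
  rw [polC_eval]
  exact Finset.prod_ne_zero_iff.mpr fun j _ => factor_ne (ha j) hw

/-- The basic identity `|1 - c̄w|² - |w - c|² = (1 - |c|²)(1 - |w|²)`. -/
lemma factor_sq (c w : ℂ) : ‖1 - (starRingEnd ℂ) c * w‖ ^ 2 - ‖w - c‖ ^ 2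
    = (1 - ‖c‖ ^ 2) * (1 - ‖w‖ ^ 2) := by
  simp only [← Complex.normSq_eq_norm_sq, Complex.normSq_apply]
  simp
  ring

lemma factor_lt {c w : ℂ} (hc : c ∈ uDisk) (hw : ‖w‖ < 1) :
    ‖w - c‖ < ‖1 - (starRingEnd ℂ) c * w‖ := by
  have hc' : ‖c‖ < 1 := by simpa [uDisk] using hc
  have h := factor_sq c w
  refine lt_of_pow_lt_pow_left₀ 2 (norm_nonneg _) ?_
  have h1 : 0 < 1 - ‖c‖ ^ 2 := by nlinarith [norm_nonneg c]
  have h2 : 0 < 1 - ‖w‖ ^ 2 := by nlinarith [norm_nonneg w]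
  nlinarith [mul_pos h1 h2]

lemma factor_ge {c w : ℂ} (hc : c ∈ uDisk) (hw : 1 ≤ ‖w‖) :
    ‖1 - (starRingEnd ℂ) c * w‖ ≤ ‖w - c‖ := by
  have hc' : ‖c‖ < 1 := by simpa [uDisk] using hc
  have h := factor_sq c w
  refine le_of_sq_le_sq ?_ (norm_nonneg _)
  have h1 : 0 < 1 - ‖c‖ ^ 2 := by nlinarith [norm_nonneg c]
  have h2 : 0 ≤ ‖w‖ ^ 2 - 1 := by nlinarith [norm_nonneg w]
  nlinarith [mul_nonneg h1.le h2]

lemma factor_circle {c w : ℂ} (hw : ‖w‖ = 1) : ‖1 - (starRingEnd ℂ) c * w‖ = ‖w - c‖ := by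
  have h := factor_sq c w
  rw [hw] at h
  exact (sq_eq_sq₀ (norm_nonneg _) (norm_nonneg _)).mp (by linarith)

lemma blaschke_norm (a : Fin n → ℂ) (w : ℂ) :
    ‖blaschke a w‖ = (∏ j, ‖w - a j‖) / ∏ j, ‖1 - (starRingEnd ℂ) (a j) * w‖ := by
  rw [blaschke_eq, polA_eval, polC_eval]
  simp [norm_prod]

lemma blaschke_mapsTo (ha : ∀ j, a j ∈ uDisk) (h0 : ∃ j, a j = 0) :
    MapsTo (blaschke a) uDisk uDisk := by
  intro w hw
  have hw' : ‖w‖ < 1 := by simpa [uDisk] using hw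
  obtain ⟨j0, -⟩ := h0
  rw [uDisk, mem_ball_zero_iff, blaschke, norm_prod]
  have : ∏ j, ‖(a j - w) / (1 - (starRingEnd ℂ) (a j) * w)‖ < ∏ _j : Fin n, (1:ℝ) := by
    by_cases hz : ∃ j, a j = w
    · obtain ⟨j, hj⟩ := hz
      rw [Finset.prod_eq_zero (Finset.mem_univ j) (by simp [hj])]
      simp
    · push Not at hz
      refine Finset.prod_lt_prod_of_nonempty (fun j _ => ?_) (fun j _ => ?_) ⟨j0, Finset.mem_univ _⟩
      · exact norm_pos_iff.mpr (div_ne_zero (sub_ne_zero.mpr (hz j)) (factor_ne (ha j) hw'.le))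
      · rw [norm_div, div_lt_one (norm_pos_iff.mpr (factor_ne (ha j) hw'.le)), norm_sub_rev]
        exact factor_lt (ha j) hw'
  simpa using this

lemma blaschke_circle (ha : ∀ j, a j ∈ uDisk) {w : ℂ} (hw : ‖w‖ = 1) : ‖blaschke a w‖ = 1 := by
  rw [blaschke_norm, Finset.prod_congr rfl fun j _ => (factor_circle (c := a j) hw).symm, div_self]
  exact Finset.prod_ne_zero_iff.mpr fun j _ => norm_ne_zero_iff.mpr (factor_ne (ha j) hw.le)

lemma blaschke_zero (h0 : ∃ j, a j = 0) : blaschke a 0 = 0 := by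
  obtain ⟨j, hj⟩ := h0
  exact Finset.prod_eq_zero (Finset.mem_univ j) (by simp [hj])

lemma blaschke_cont (ha : ∀ j, a j ∈ uDisk) : ContinuousOn (blaschke a) (closedBall 0 1) := by
  have : blaschke a = fun w => (-1) ^ n * (polA a).eval w / (polC a).eval w := funext (blaschke_eq a)
  rw [this]
  exact ((continuous_const.mul (polA a).continuous).continuousOn).div (polC a).continuous.continuousOn
    fun w hw => polC_ne ha (by simpa using hw)

lemma blaschke_diff (ha : ∀ j, a j ∈ uDisk) : DifferentiableOn ℂ (blaschke a) uDisk := by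
  have : blaschke a = fun w => (-1) ^ n * (polA a).eval w / (polC a).eval w := funext (blaschke_eq a)
  rw [this]
  refine DifferentiableOn.div ((differentiable_const _).mul (polA a).differentiable).differentiableOn
    (polC a).differentiable.differentiableOn fun w hw => polC_ne ha ?_
  exact (by simpa [uDisk] using hw : ‖w‖ < 1).le

lemma polC_degree (h0 : ∃ j, a j = 0) : (polC a).degree < (n : WithBot ℕ) := by
  obtain ⟨j, hj⟩ := h0
  have hn : 0 < n := j.pos
  rw [polC, ← Finset.mul_prod_erase _ _ (Finset.mem_univ j), hj]
  simp only [map_zero, zero_mul, sub_zero, one_mul]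
  refine (degree_prod_le _ _).trans_lt ?_
  have h1 : ∀ k ∈ Finset.univ.erase j,
      (1 - C ((starRingEnd ℂ) (a k)) * X : ℂ[X]).degree ≤ 1 := fun k _ => by
    refine (degree_sub_le _ _).trans (max_le (degree_one_le.trans (by norm_num)) ?_)
    exact degree_C_mul_X_le _
  refine (Finset.sum_le_sum h1).trans_lt ?_
  simp only [Finset.sum_const, Finset.card_erase_of_mem (Finset.mem_univ j), Finset.card_univ,
    Fintype.card_fin, nsmul_eq_mul, mul_one]
  exact_mod_cast Nat.sub_lt hn one_pos

lemma polA_monic (a : Fin n → ℂ) : (polA a).Monic := monic_prod_X_sub_C a _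

lemma polA_degree (a : Fin n → ℂ) : (polA a).degree = n := by
  rw [polA, degree_prod]
  simp

lemma fibPol_aux (h0 : ∃ j, a j = 0) (b : ℂ) :
    (C ((-1) ^ n * b) * polC a).degree < (polA a).degree := by
  rw [polA_degree]
  rw [← smul_eq_C_mul]
  exact (degree_smul_le _ _).trans_lt (polC_degree h0)

lemma fibPol_monic (h0 : ∃ j, a j = 0) (b : ℂ) : (fibPol a b).Monic :=
  (polA_monic a).sub_of_left (fibPol_aux h0 b)

lemma fibPol_degree (h0 : ∃ j, a j = 0) (b : ℂ) : (fibPol a b).degree = n := by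
  rw [fibPol, degree_sub_eq_left_of_degree_lt (fibPol_aux h0 b), polA_degree]

lemma fiberMS_eq (a : Fin n → ℂ) (z : ℂ) : fiberMS a z = (fibPol a (blaschke a z)).roots := by
  have hsq : ((-1 : ℂ[X]) ^ n) * (-1) ^ n = 1 := by rw [← mul_pow]; simp
  have : ((∏ j, (C (a j) - X)) - C (blaschke a z) * ∏ j, (1 - C ((starRingEnd ℂ) (a j)) * X))
      = C ((-1) ^ n) * fibPol a (blaschke a z) := by
    have e : ∀ j, (C (a j) - X : ℂ[X]) = (-1) * (X - C (a j)) := fun j => by ring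
    simp only [e, Finset.prod_mul_distrib, Finset.prod_const, Finset.card_univ, Fintype.card_fin,
      fibPol, polA, polC, map_mul, map_pow, map_neg, map_one]
    linear_combination (C (blaschke a z) * ∏ j, (1 - C ((starRingEnd ℂ) (a j)) * X)) * hsq
  rw [fiberMS, this, roots_C_mul _ (by simp)]

lemma fibPol_root_self (ha : ∀ j, a j ∈ uDisk) {z : ℂ} (hz : ‖z‖ ≤ 1) :
    (fibPol a (blaschke a z)).eval z = 0 := by
  have hsq : ((-1 : ℂ) ^ n) * (-1) ^ n = 1 := by rw [← mul_pow]; simp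
  simp only [fibPol, eval_sub, eval_mul, eval_C, blaschke_eq]
  field_simp [polC_ne ha hz]
  linear_combination -((polA a).eval z) * hsq

lemma fibPol_root (ha : ∀ j, a j ∈ uDisk) {b w : ℂ} (hb : ‖b‖ < 1)
    (hw : (fibPol a b).eval w = 0) : w ∈ uDisk ∧ blaschke a w = b := by
  have hsq : ((-1 : ℂ) ^ n) * (-1) ^ n = 1 := by rw [← mul_pow]; simp
  simp only [fibPol, eval_sub, eval_mul, eval_C] at hw
  have hlt : ‖w‖ < 1 := by
    by_contra hge
    push Not at hge
    have h1 : ‖(polA a).eval w‖ = ‖b‖ * ‖(polC a).eval w‖ := by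
      rw [sub_eq_zero.mp hw]; simp
    have h2 : ‖(polC a).eval w‖ ≤ ‖(polA a).eval w‖ := by
      rw [polA_eval, polC_eval, norm_prod, norm_prod]
      exact Finset.prod_le_prod (fun _ _ => norm_nonneg _) fun j _ => factor_ge (ha j) hge
    have h3 : 0 < ‖(polA a).eval w‖ := by
      rw [polA_eval, norm_pos_iff]
      refine Finset.prod_ne_zero_iff.mpr fun j _ h => ?_
      have : ‖a j‖ < 1 := by simpa [uDisk] using ha j
      rw [sub_eq_zero.mp h] at hge
      linarith
    have h4 := norm_nonneg b
    nlinarith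
  refine ⟨by simpa [uDisk] using hlt, ?_⟩
  rw [blaschke_eq, div_eq_iff (polC_ne ha hlt.le)]
  linear_combination (-1) ^ n * hw + b * (polC a).eval w * hsq

lemma fibPol_enum (h0 : ∃ j, a j = 0) (b : ℂ) : ∃ φ : Fin n → ℂ,
    fibPol a b = ∏ j, (X - C (φ j)) ∧ (fibPol a b).roots = Finset.univ.val.map φ := by
  have hm := fibPol_monic h0 b
  have hsp : (fibPol a b).Splits := IsAlgClosed.splits _
  have hcard : (fibPol a b).roots.card = n := by
    rw [← hsp.natDegree_eq_card_roots]
    exact natDegree_eq_of_degree_eq_some (fibPol_degree h0 b)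
  obtain ⟨l, hl⟩ : ∃ l : List ℂ, (l : Multiset ℂ) = (fibPol a b).roots := Quotient.exists_rep _
  have hlen : l.length = n := by rw [← hcard, ← hl, Multiset.coe_card]
  subst hlen
  have hr : (fibPol a b).roots = Finset.univ.val.map (fun j => l.get j) := by
    rw [← hl, Fin.univ_val_map, List.ofFn_get]
  refine ⟨fun j => l.get j, ?_, hr⟩
  rw [hsp.eq_prod_roots_of_monic hm, hr, Multiset.map_map]
  rfl

/-- The derivative of `fibPol a (B w)` at its root `w`, as a function of `w`. -/
def fibDer (a : Fin n → ℂ) (w : ℂ) : ℂ :=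
  (derivative (polA a)).eval w - (-1) ^ n * blaschke a w * (derivative (polC a)).eval w

lemma fibDer_eq {φ : Fin n → ℂ} {b : ℂ} (hφ : fibPol a b = ∏ j, (X - C (φ j))) (j : Fin n)
    (hb : blaschke a (φ j) = b) :
    fibDer a (φ j) = ∏ k ∈ Finset.univ.erase j, (φ j - φ k) := by
  have h1 : (derivative (fibPol a b)).eval (φ j) = fibDer a (φ j) := by
    rw [fibPol, derivative_sub, derivative_C_mul, eval_sub, eval_mul, eval_C, fibDer, hb]
  rw [← h1, hφ]
  have := Lagrange.eval_nodal_derivative_eval_node_eq (s := Finset.univ) (v := φ) (Finset.mem_univ j)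
  rw [Lagrange.eval_nodal] at this
  exact this

lemma derivative_prod_eval (f : Fin n → ℂ[X]) (w : ℂ) (hf : ∀ j, (f j).eval w ≠ 0) :
    (derivative (∏ j, f j)).eval w
      = (∏ j, f j).eval w * ∑ j, (derivative (f j)).eval w / (f j).eval w := by
  rw [derivative_prod_finset, eval_finsetSum, Finset.mul_sum]
  refine Finset.sum_congr rfl fun j _ => ?_
  rw [← Finset.mul_prod_erase Finset.univ f (Finset.mem_univ j), eval_mul, eval_mul]
  field_simp [hf j]

/-- On the unit circle `w B'(w)/B(w) = ∑_j (1 - |a_j|²)/|w - a_j|² > 0`. -/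
lemma fibDer_ne (ha : ∀ j, a j ∈ uDisk) (h0 : ∃ j, a j = 0) {w : ℂ} (hw : ‖w‖ = 1) :
    fibDer a w ≠ 0 := by
  have hwc : w * (starRingEnd ℂ) w = 1 := by rw [Complex.mul_conj, Complex.normSq_eq_norm_sq, hw]; simp
  have hw0 : w ≠ 0 := by rintro rfl; simp at hw
  have hd : ∀ j, w - a j ≠ 0 := fun j h => by
    have : ‖a j‖ < 1 := by simpa [uDisk] using ha j
    rw [← sub_eq_zero.mp h, hw] at this
    exact lt_irrefl _ this
  have hsq : ((-1 : ℂ) ^ n) * (-1) ^ n = 1 := by rw [← mul_pow]; simp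
  have hA : (derivative (polA a)).eval w = (polA a).eval w * ∑ j, 1 / (w - a j) := by
    rw [polA, derivative_prod_eval _ _ (fun j => by simpa using hd j)]
    simp
  have hC : (derivative (polC a)).eval w = (polC a).eval w *
      ∑ j, (-(starRingEnd ℂ) (a j)) / (1 - (starRingEnd ℂ) (a j) * w) := by
    rw [polC, derivative_prod_eval _ _ (fun j => by simpa using factor_ne (ha j) hw.le)]
    simp
  have hA0 : (polA a).eval w ≠ 0 := by
    rw [polA_eval]; exact Finset.prod_ne_zero_iff.mpr fun j _ => hd j
  have hE : w * fibDer a w = (polA a).eval w *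
      ((∑ j, (1 - ‖a j‖ ^ 2) / ‖w - a j‖ ^ 2 : ℝ) : ℂ) := by
    rw [fibDer, hA, hC, blaschke_eq]
    have h1 : (-1:ℂ) ^ n * ((-1) ^ n * (polA a).eval w / (polC a).eval w) * ((polC a).eval w *
      ∑ j, (-(starRingEnd ℂ) (a j)) / (1 - (starRingEnd ℂ) (a j) * w)) = (polA a).eval w *
      ∑ j, (-(starRingEnd ℂ) (a j)) / (1 - (starRingEnd ℂ) (a j) * w) := by
      have := polC_ne ha hw.le
      rw [mul_div_assoc, ← mul_assoc ((-1:ℂ) ^ n), hsq, one_mul, ← mul_assoc,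
        div_mul_cancel₀ _ this]
    rw [h1, ← mul_sub, ← Finset.sum_sub_distrib, mul_left_comm, Finset.mul_sum, Complex.ofReal_sum]
    congr 1
    refine Finset.sum_congr rfl fun j _ => ?_
    have e1 : 1 - (starRingEnd ℂ) (a j) * w = w * (starRingEnd ℂ) (w - a j) := by
      rw [map_sub]; linear_combination -hwc
    have hcd : (starRingEnd ℂ) (w - a j) ≠ 0 := by
      rw [Ne, map_eq_zero]; exact hd j
    have e2 : ((‖w - a j‖ : ℂ)) ^ 2 = (w - a j) * (starRingEnd ℂ) (w - a j) := by
      rw [Complex.mul_conj, Complex.normSq_eq_norm_sq]; simp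
    have e3 : ((‖a j‖ : ℂ)) ^ 2 = a j * (starRingEnd ℂ) (a j) := by
      rw [Complex.mul_conj, Complex.normSq_eq_norm_sq]; simp
    push_cast
    rw [e1, e2, e3]
    field_simp [hd j]
    rw [map_sub]
    linear_combination hwc
  intro h
  rw [h, mul_zero] at hE
  have h2 := (mul_eq_zero.mp hE.symm).resolve_left hA0
  rw [Complex.ofReal_eq_zero] at h2
  obtain ⟨j0, -⟩ := h0
  refine absurd h2 (ne_of_gt (Finset.sum_pos (fun j _ => ?_) ⟨j0, Finset.mem_univ _⟩))
  have h3 : ‖a j‖ < 1 := by simpa [uDisk] using ha j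
  have h4 := norm_pos_iff.mpr (hd j)
  have h5 : 0 < 1 - ‖a j‖ ^ 2 := by nlinarith [norm_nonneg (a j)]
  positivity

/-- A positive function on the closed disk, given as a maximum of two continuous functions, has a
positive lower bound. -/
lemma exists_pos_lower {f g : ℂ → ℝ} (hf : ContinuousOn f (closedBall 0 1))
    (hg : ContinuousOn g (closedBall 0 1)) (h : ∀ w ∈ closedBall (0:ℂ) 1, 0 < f w ∨ 0 < g w) :
    ∃ c > 0, ∀ w ∈ closedBall (0:ℂ) 1, c ≤ f w ∨ c ≤ g w := by
  obtain ⟨x, hx, hmin⟩ := (isCompact_closedBall (0:ℂ) 1).exists_isMinOn ⟨0, by simp⟩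
    (f := fun w => max (f w) (g w)) (hf.sup hg)
  refine ⟨max (f x) (g x), by simpa using h x hx, fun w hw => ?_⟩
  exact le_max_iff.mp (hmin hw)

lemma fibDer_lower (ha : ∀ j, a j ∈ uDisk) (h0 : ∃ j, a j = 0) :
    ∃ δ > 0, ∃ β : ℝ, 0 ≤ β ∧ β < 1 ∧ ∀ w ∈ uDisk, β < ‖blaschke a w‖ → δ ≤ ‖fibDer a w‖ := by
  have hB := blaschke_cont ha
  have hE : ContinuousOn (fibDer a) (closedBall 0 1) :=
    (derivative (polA a)).continuous.continuousOn.sub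
      ((continuousOn_const.mul hB).mul (derivative (polC a)).continuous.continuousOn)
  obtain ⟨c, hc, H⟩ := exists_pos_lower (f := fun w => ‖fibDer a w‖) (g := fun w => 1 - ‖blaschke a w‖)
    hE.norm (continuousOn_const.sub hB.norm) (fun w hw => by
      rcases (mem_closedBall_zero_iff.mp hw).lt_or_eq with h | h
      · right
        have : blaschke a w ∈ uDisk := blaschke_mapsTo ha h0 (by simpa [uDisk] using h)
        simp only [uDisk, mem_ball_zero_iff] at this
        linarith
      · left; exact norm_pos_iff.mpr (fibDer_ne ha h0 h))
  refine ⟨c, hc, 1 - min c 1 / 2, by linarith [min_le_right c 1],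
    by linarith [lt_min hc one_pos], fun w hw hb => ?_⟩
  refine (H w (ball_subset_closedBall hw)).resolve_right fun h => ?_
  linarith [lt_min hc one_pos, min_le_left c 1]

lemma blaschke_proper (ha : ∀ j, a j ∈ uDisk) (h0 : ∃ j, a j = 0) {β : ℝ} (hβ0 : 0 ≤ β)
    (hβ : β < 1) : ∃ s : ℝ, 0 ≤ s ∧ s < 1 ∧ ∀ w ∈ uDisk, ‖blaschke a w‖ ≤ β → ‖w‖ ≤ s := by
  have hB := blaschke_cont ha
  obtain ⟨c, hc, H⟩ := exists_pos_lower (f := fun w => 1 - ‖w‖) (g := fun w => ‖blaschke a w‖ - β)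
    (by fun_prop) (hB.norm.sub continuousOn_const) (fun w hw => by
      rcases (mem_closedBall_zero_iff.mp hw).lt_or_eq with h | h
      · left; linarith
      · right; rw [blaschke_circle ha h]; linarith)
  have key : ∀ w ∈ uDisk, ‖blaschke a w‖ ≤ β → ‖w‖ ≤ 1 - c := fun w hw hb => by
    rcases H w (ball_subset_closedBall hw) with h | h <;> linarith
  refine ⟨1 - c, ?_, by linarith, key⟩
  have := key 0 (by simp [uDisk]) (by rw [blaschke_zero h0]; simpa using hβ0)
  simpa using this

/-! ### Coordinates of bounded functions over the Blaschke product -/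

/-- An enumeration `φ` of the fibre of `B` over `b`, with quantitative separation `δ`. -/
structure SimpleFib (a : Fin n → ℂ) (δ : ℝ) (b : ℂ) (φ : Fin n → ℂ) : Prop where
  eq_prod : fibPol a b = ∏ j, (X - C (φ j))
  roots_eq : (fibPol a b).roots = Finset.univ.val.map φ
  mem : ∀ j, φ j ∈ uDisk
  val : ∀ j, blaschke a (φ j) = b
  sep : ∀ j, δ ≤ ‖∏ k ∈ Finset.univ.erase j, (φ j - φ k)‖

lemma exists_simpleFib (ha : ∀ j, a j ∈ uDisk) (h0 : ∃ j, a j = 0) :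
    ∃ δ > 0, ∃ β : ℝ, 0 ≤ β ∧ β < 1 ∧ ∀ b : ℂ, β < ‖b‖ → ‖b‖ < 1 → ∃ φ, SimpleFib a δ b φ := by
  obtain ⟨δ, hδ, β, hβ0, hβ1, H⟩ := fibDer_lower ha h0
  refine ⟨δ, hδ, β, hβ0, hβ1, fun b hb hb1 => ?_⟩
  obtain ⟨φ, hφ, hr⟩ := fibPol_enum h0 b
  have hroot : ∀ j, (fibPol a b).eval (φ j) = 0 := fun j => by
    rw [hφ, eval_prod]
    exact Finset.prod_eq_zero (Finset.mem_univ j) (by simp)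
  have h1 := fun j => fibPol_root ha hb1 (hroot j)
  refine ⟨φ, hφ, hr, fun j => (h1 j).1, fun j => (h1 j).2, fun j => ?_⟩
  rw [← fibDer_eq hφ j (h1 j).2]
  exact H _ (h1 j).1 (by rw [(h1 j).2]; exact hb)

lemma inj_of_sep {φ : Fin n → ℂ} {δ : ℝ} (hδ : 0 < δ)
    (h : ∀ j, δ ≤ ‖∏ k ∈ Finset.univ.erase j, (φ j - φ k)‖) : Function.Injective φ := by
  intro j k hjk
  by_contra hne
  have := h j
  rw [Finset.prod_eq_zero (i := k) (by simp [Ne.symm hne]) (by rw [hjk, sub_self]), norm_zero] at this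
  linarith

lemma coeff_prod_le {φ : Fin n → ℂ} (hφ : ∀ j, ‖φ j‖ ≤ 1) (s : Finset (Fin n)) (i : ℕ) :
    ‖(∏ k ∈ s, (X - C (φ k))).coeff i‖ ≤ 2 ^ s.card := by
  induction s using Finset.induction_on generalizing i with
  | empty =>
    simp only [Finset.prod_empty, coeff_one, Finset.card_empty, pow_zero]
    split_ifs <;> simp
  | insert j s hj ih =>
    rw [Finset.prod_insert hj, Finset.card_insert_of_notMem hj, sub_mul, coeff_sub, coeff_C_mul,
      pow_succ, mul_two]
    refine (norm_sub_le _ _).trans (add_le_add ?_ ?_)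
    · cases i with
      | zero => simp
      | succ i => rw [coeff_X_mul]; exact ih i
    · rw [norm_mul]
      exact (mul_le_of_le_one_left (norm_nonneg _) (hφ j)).trans (ih i)

/-- A polynomial of degree `< n` is controlled, coefficientwise, by its values at `n` quantitatively
separated points of the disk (Lagrange interpolation). -/
lemma coeff_bound {φ : Fin n → ℂ} (hφ : ∀ j, ‖φ j‖ ≤ 1) {δ : ℝ} (hδ : 0 < δ)
    (h : ∀ j, δ ≤ ‖∏ k ∈ Finset.univ.erase j, (φ j - φ k)‖) {r : ℂ[X]}
    (hr : r.degree < (n : WithBot ℕ)) {M : ℝ} (hM : ∀ j, ‖r.eval (φ j)‖ ≤ M) (i : ℕ) :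
    ‖r.coeff i‖ ≤ n * (2 ^ n / δ) * M := by
  have hinj := inj_of_sep hδ h
  have hL := Lagrange.eq_interpolate (s := Finset.univ) (v := φ) hinj.injOn (f := r) (by simpa using hr)
  rw [hL, Lagrange.interpolate_apply, finsetSum_coeff]
  refine (norm_sum_le _ _).trans ?_
  have hb : ∀ j : Fin n, ‖(C (r.eval (φ j)) * Lagrange.basis Finset.univ φ j).coeff i‖
      ≤ (2 ^ n / δ) * M := by
    intro j
    have e : Lagrange.basis Finset.univ φ j = C ((∏ k ∈ Finset.univ.erase j, (φ j - φ k))⁻¹) *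
        ∏ k ∈ Finset.univ.erase j, (X - C (φ k)) := by
      simp only [Lagrange.basis, Lagrange.basisDivisor, Finset.prod_mul_distrib, ← Finset.prod_inv_distrib,
        map_prod]
    rw [e, coeff_C_mul, coeff_C_mul, norm_mul, norm_mul, norm_inv, mul_comm]
    have h1 : ‖∏ k ∈ Finset.univ.erase j, (φ j - φ k)‖⁻¹ ≤ δ⁻¹ := inv_anti₀ hδ (h j)
    have h2 := coeff_prod_le hφ (Finset.univ.erase j) i
    have h3 : (2:ℝ) ^ (Finset.univ.erase j).card ≤ 2 ^ n :=
      pow_le_pow_right₀ one_le_two ((Finset.card_erase_le).trans (by simp))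
    rw [div_eq_inv_mul]
    exact mul_le_mul (mul_le_mul h1 (h2.trans h3) (norm_nonneg _) (by positivity)) (hM j)
      (norm_nonneg _) (by positivity)
  refine (Finset.sum_le_sum fun j _ => hb j).trans (le_of_eq ?_)
  simp [mul_assoc]

/-- The remainder of `X ^ k` modulo `fibPol a b`, by the division recursion. -/
def remPol (a : Fin n → ℂ) (b : ℂ) : ℕ → ℂ[X]
  | 0 => 1
  | k + 1 => X * remPol a b k - C ((remPol a b k).coeff (n - 1)) * fibPol a b

lemma remPol_degree (h0 : ∃ j, a j = 0) (b : ℂ) (k : ℕ) :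
    (remPol a b k).degree < (n : WithBot ℕ) := by
  have hn : 0 < n := h0.choose.pos
  induction k with
  | zero =>
    rw [remPol, degree_one]; exact_mod_cast hn
  | succ k ih =>
    rw [degree_lt_iff_coeff_zero] at ih ⊢
    intro m hm
    rw [remPol, coeff_sub, coeff_C_mul]
    obtain ⟨m, rfl⟩ : ∃ l, m = l + 1 := ⟨m - 1, by omega⟩
    rw [coeff_X_mul]
    rcases hm.eq_or_lt with h | h
    · have h1 : (fibPol a b).coeff (m + 1) = 1 := by
        have h2 := (fibPol_monic h0 b).coeff_natDegree
        rwa [(natDegree_eq_of_degree_eq_some (fibPol_degree h0 b)).trans h] at h2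
      have h2 : n - 1 = m := by omega
      rw [h1, h2]; ring
    · have h1 : (fibPol a b).coeff (m + 1) = 0 :=
        coeff_eq_zero_of_degree_lt (by rw [fibPol_degree h0]; exact_mod_cast h)
      rw [ih m (by omega), h1]; ring

lemma remPol_eval (b : ℂ) {w : ℂ} (hw : (fibPol a b).eval w = 0) (k : ℕ) :
    (remPol a b k).eval w = w ^ k := by
  induction k with
  | zero => simp [remPol]
  | succ k ih => rw [remPol, eval_sub, eval_mul, eval_mul, hw, ih, eval_X]; ring

lemma remPol_diff (k i : ℕ) : Differentiable ℂ fun b => (remPol a b k).coeff i := by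
  induction k generalizing i with
  | zero => simp only [remPol]; exact differentiable_const _
  | succ k ih =>
    have h1 : Differentiable ℂ fun b => (fibPol a b).coeff i := by
      simp only [fibPol, coeff_sub, coeff_C_mul]
      fun_prop
    simp only [remPol, coeff_sub, coeff_C_mul]
    refine Differentiable.sub ?_ ((ih _).mul h1)
    cases i with
    | zero => simp
    | succ i => simp only [coeff_X_mul]; exact ih i

lemma eval_eq_sum_fin {r : ℂ[X]} (hr : r.degree < (n : WithBot ℕ)) (w : ℂ) :
    r.eval w = ∑ i : Fin n, r.coeff i * w ^ (i:ℕ) := by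
  rw [Finset.sum_range (fun i => r.coeff i * w ^ i) |>.symm]
  by_cases h : r = 0
  · simp [h]
  · exact eval_eq_sum_range' ((natDegree_lt_iff_degree_lt h).mpr hr) w

/-- `H^∞` is spanned by `1, z, …, z^{n-1}` over `{c ∘ B : c ∈ H^∞}`. The coefficient functions are
obtained by reducing the power series of `u` modulo `fibPol a b` term by term. -/
lemma hinf_decomp (ha : ∀ j, a j ∈ uDisk) (h0 : ∃ j, a j = 0) {u : ℂ → ℂ} (hu : MemHinf u) :
    ∃ U : Fin n → ℂ → ℂ, (∀ i, MemHinf (U i)) ∧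
      ∀ z ∈ uDisk, u z = ∑ i, U i (blaschke a z) * z ^ (i:ℕ) := by
  obtain ⟨hud, M, hM⟩ := hu
  obtain ⟨c, hc, hc2⟩ := hinf_coeff hud hM
  have hcK := coeff_bdd hc2
  obtain ⟨δ, hδ, β₀, hβ0, hβ1, hfib⟩ := exists_simpleFib ha h0
  have hmem : ∀ {w : ℂ}, w ∈ uDisk → ‖w‖ < 1 := fun {w} hw => by simpa [uDisk] using hw
  -- locally uniform geometric bounds for the coefficients of the remainders
  have hrem : ∀ β, β₀ < β → β < 1 → ∃ s : ℝ, 0 ≤ s ∧ s < 1 ∧ ∀ b : ℂ, ‖b‖ ≤ β → ∀ k i,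
      ‖(remPol a b k).coeff i‖ ≤ n * (2 ^ n / δ) * s ^ k := by
    intro β hβ hβ'
    obtain ⟨s, hs0, hs1, hs⟩ := blaschke_proper ha h0 (hβ0.trans hβ.le) hβ'
    refine ⟨s, hs0, hs1, fun b hb k i => ?_⟩
    have hβpos : 0 < β := hβ0.trans_lt hβ
    refine norm_le_of_forall_mem_frontier_norm_le (U := ball (0:ℂ) β)
        (f := fun b => (remPol a b k).coeff i)
        isBounded_ball (remPol_diff k i).diffContOnCl ?_
        (by rw [closure_ball _ hβpos.ne']; simpa using hb)
    intro b hb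
    rw [frontier_ball _ hβpos.ne', mem_sphere_zero_iff_norm] at hb
    obtain ⟨φ, hφ⟩ := hfib b (by linarith) (by linarith)
    refine coeff_bound (fun j => (hmem (hφ.mem j)).le) hδ hφ.sep (remPol_degree h0 b k) (fun j => ?_) i
    have hroot : (fibPol a b).eval (φ j) = 0 := by
      rw [hφ.eq_prod, eval_prod]
      exact Finset.prod_eq_zero (Finset.mem_univ j) (by simp)
    rw [remPol_eval b hroot, norm_pow]
    gcongr
    exact hs _ (hφ.mem j) (by rw [hφ.val j, hb])
  have hterm : ∀ β, β₀ < β → β < 1 → ∃ v : ℕ → ℝ, Summable v ∧ ∀ b : ℂ, ‖b‖ ≤ β → ∀ i k,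
      ‖c k * (remPol a b k).coeff i‖ ≤ v k := by
    intro β hβ hβ'
    obtain ⟨s, hs0, hs1, hs⟩ := hrem β hβ hβ'
    refine ⟨fun k => n * (2 ^ n / δ) * (‖c k‖ * s ^ k), (coeff_summable hcK hs0 hs1).mul_left _,
      fun b hb i k => ?_⟩
    rw [norm_mul]
    calc _ ≤ ‖c k‖ * (n * (2 ^ n / δ) * s ^ k) := by gcongr; exact hs b hb k i
      _ = _ := by ring
  have hbetween : ∀ b : ℂ, ‖b‖ < 1 → ∃ β, β₀ < β ∧ β < 1 ∧ ‖b‖ < β := fun b hb => by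
    obtain ⟨β, h1, h2⟩ := exists_between (max_lt hβ1 hb)
    exact ⟨β, (le_max_left _ _).trans_lt h1, h2, (le_max_right _ _).trans_lt h1⟩
  set U : Fin n → ℂ → ℂ := fun i b => ∑' k, c k * (remPol a b k).coeff i with hU
  have hUd : ∀ i, DifferentiableOn ℂ (U i) uDisk := by
    intro i b hb
    obtain ⟨β, h1, h2, h3⟩ := hbetween b (hmem hb)
    obtain ⟨v, hv, hvb⟩ := hterm β h1 h2
    have := differentiableOn_tsum_of_summable_norm (F := fun k b => c k * (remPol a b k).coeff i)
      (U := ball (0:ℂ) β) hv (fun k => ((remPol_diff k i).const_mul (c k)).differentiableOn) isOpen_ball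
      (fun k w hw => hvb w (mem_ball_zero_iff.mp hw).le i k)
    exact (this.differentiableAt (isOpen_ball.mem_nhds (by simpa using h3))).differentiableWithinAt
  have hdec : ∀ z ∈ uDisk, u z = ∑ i, U i (blaschke a z) * z ^ (i:ℕ) := by
    intro z hz
    obtain ⟨β, h1, h2, h3⟩ := hbetween _ (hmem (blaschke_mapsTo ha h0 hz))
    obtain ⟨v, hv, hvb⟩ := hterm β h1 h2
    have hs : ∀ i : Fin n, HasSum (fun k => c k * (remPol a (blaschke a z) k).coeff i)
        (U i (blaschke a z)) := fun i =>
      (Summable.of_norm_bounded hv (fun k => hvb _ h3.le i k)).hasSum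
    have h4 := hasSum_sum (s := Finset.univ) fun (i : Fin n) _ => (hs i).mul_right (z ^ (i:ℕ))
    refine (hc z hz).unique ?_
    refine h4.congr_fun fun k => ?_
    have h5 := remPol_eval (blaschke a z) (fibPol_root_self ha (hmem hz).le) k
    rw [eval_eq_sum_fin (remPol_degree h0 _ _)] at h5
    rw [← h5, Finset.mul_sum]
    exact Finset.sum_congr rfl fun i _ => by ring
  refine ⟨U, fun i => ⟨hUd i, ?_⟩, hdec⟩
  obtain ⟨K, hK⟩ := (isCompact_closedBall (0:ℂ) β₀).exists_bound_of_continuousOn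
    ((hUd i).continuousOn.mono (closedBall_subset_ball hβ1))
  refine ⟨max K (n * (2 ^ n / δ) * M), fun b hb => ?_⟩
  by_cases h : ‖b‖ ≤ β₀
  · exact (hK b (by simpa using h)).trans (le_max_left _ _)
  refine le_trans ?_ (le_max_right _ _)
  obtain ⟨φ, hφ⟩ := hfib b (not_le.mp h) (hmem hb)
  set r : ℂ[X] := ∑ i : Fin n, C (U i b) * X ^ (i:ℕ) with hr
  have hrd : r.degree < (n : WithBot ℕ) := by
    refine (degree_sum_fin_lt fun i => U i b)
  have hcoeff : r.coeff i = U i b := by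
    rw [hr, finsetSum_coeff, Finset.sum_eq_single i]
    · simp
    · intro k _ hk
      rw [coeff_C_mul, coeff_X_pow, if_neg (fun h => hk (Fin.ext h.symm)), mul_zero]
    · simp
  rw [← hcoeff]
  refine coeff_bound (fun j => (hmem (hφ.mem j)).le) hδ hφ.sep hrd (fun j => ?_) i
  have := hdec _ (hφ.mem j)
  rw [hφ.val j] at this
  rw [hr, eval_finsetSum]
  simp only [eval_mul, eval_C, eval_pow, eval_X]
  rw [← this]
  exact hM _ (hφ.mem j)

/-! ### The adjugate identity -/

/-- Let `M` be the matrix of multiplication by `g` and `c` the coordinates of `h` with respect to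
`1, z, …, z^{n-1}` on the finite set `{φ_j}`, and let `i₀ = n - 1`. Conjugating with the Vandermonde
matrix, which diagonalises `M`, gives
`∏_{k ≠ j₀} (φ_{j₀} - φ_k) · [adj(g(φ_{j₀}) - M) c]_{i₀} = ∏_{k ≠ j₀} (g(φ_{j₀}) - g(φ_k)) · h(φ_{j₀})`. -/
lemma adjugate_identity {φ : Fin n → ℂ} (hφ : Function.Injective φ) (γ η c : Fin n → ℂ)
    (M : Matrix (Fin n) (Fin n) ℂ)
    (hM : ∀ j (i : Fin n), γ j * φ j ^ (i:ℕ) = ∑ k, M k i * φ j ^ (k:ℕ))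
    (hc : ∀ j, η j = ∑ k, c k * φ j ^ (k:ℕ)) (j₀ i₀ : Fin n) (hi : (i₀:ℕ) = n - 1) :
    (∏ k ∈ Finset.univ.erase j₀, (φ j₀ - φ k)) *
        ((Matrix.scalar (Fin n) (γ j₀) - M).adjugate.mulVec c i₀)
      = (∏ k ∈ Finset.univ.erase j₀, (γ j₀ - γ k)) * η j₀ := by
  set V := Matrix.vandermonde φ with hV
  set D := ∏ k ∈ Finset.univ.erase j₀, (φ j₀ - φ k) with hD
  set P := ∏ k ∈ Finset.univ.erase j₀, (γ j₀ - γ k) with hP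
  set N := Matrix.scalar (Fin n) (γ j₀) - M with hN
  have hVdet : V.det ≠ 0 := Matrix.det_vandermonde_ne_zero_iff.mpr hφ
  have h1 : V * N = Matrix.diagonal (fun j => γ j₀ - γ j) * V := by
    ext j i
    rw [Matrix.diagonal_mul, hN, Matrix.mul_sub, Matrix.sub_apply, Matrix.scalar_apply,
      Matrix.mul_diagonal, Matrix.mul_apply]
    have := hM j i
    simp only [hV, Matrix.vandermonde_apply]
    rw [sub_mul, this, mul_comm]
    congr 1
    exact Finset.sum_congr rfl fun k _ => mul_comm _ _
  have h2 : N.adjugate * V.adjugate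
      = V.adjugate * (Matrix.diagonal (fun j => γ j₀ - γ j)).adjugate := by
    rw [← Matrix.adjugate_mul_distrib, h1, Matrix.adjugate_mul_distrib]
  have hVc : V.mulVec c = η := by
    ext j
    rw [hc j]
    simp only [hV, Matrix.mulVec, dotProduct, Matrix.vandermonde_apply]
    exact Finset.sum_congr rfl fun k _ => mul_comm _ _
  have hdiag : (Matrix.diagonal (fun j => γ j₀ - γ j)).adjugate.mulVec η = Pi.single j₀ (P * η j₀) := by
    rw [Matrix.adjugate_diagonal]
    ext j
    rw [Matrix.mulVec_diagonal]
    by_cases hj : j = j₀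
    · subst hj; rw [Pi.single_eq_same]
    · rw [Pi.single_eq_of_ne hj,
        Finset.prod_eq_zero (i := j₀) (by simp [Ne.symm hj]) (sub_self _), zero_mul]
  have h3 : V.det * N.adjugate.mulVec c i₀ = V.adjugate i₀ j₀ * (P * η j₀) := by
    have e : V.det • N.adjugate.mulVec c = V.adjugate.mulVec (Pi.single j₀ (P * η j₀)) := by
      rw [← hdiag, ← hVc, Matrix.mulVec_mulVec, ← h2, Matrix.mulVec_mulVec, Matrix.mul_assoc,
        Matrix.adjugate_mul, Matrix.mul_smul, Matrix.mul_one, Matrix.smul_mulVec]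
    have := congrFun e i₀
    rw [Pi.smul_apply, smul_eq_mul] at this
    rw [this, Matrix.mulVec_single]
    simp [Matrix.col, mul_comm]
  -- the polynomial vanishing at all `φ_k`, `k ≠ j₀`
  set q : ℂ[X] := ∏ k ∈ Finset.univ.erase j₀, (X - C (φ k)) with hq
  have hqm : q.Monic := monic_prod_X_sub_C φ _
  have hqdeg : q.natDegree = n - 1 := by
    rw [hq, natDegree_prod_of_monic _ _ (fun k _ => monic_X_sub_C _)]
    simp
  have hn : 0 < n := j₀.pos
  have hqd : q.degree < (n : WithBot ℕ) := by
    rw [degree_eq_natDegree hqm.ne_zero, hqdeg]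
    exact_mod_cast Nat.sub_lt hn one_pos
  have h4 : V.det = V.adjugate i₀ j₀ * D := by
    have e1 : V.mulVec (fun i => q.coeff i) = Pi.single j₀ D := by
      ext j
      have : V.mulVec (fun i => q.coeff i) j = q.eval (φ j) := by
        rw [eval_eq_sum_fin hqd]
        simp only [hV, Matrix.mulVec, dotProduct, Matrix.vandermonde_apply]
        exact Finset.sum_congr rfl fun k _ => mul_comm _ _
      rw [this, hq, eval_prod]
      simp only [eval_sub, eval_X, eval_C]
      by_cases hj : j = j₀
      · subst hj; rw [Pi.single_eq_same]
      · rw [Pi.single_eq_of_ne hj, Finset.prod_eq_zero (i := j) (by simp [hj]) (sub_self _)]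
    have e2 : V.det • (fun i : Fin n => q.coeff i) = V.adjugate.mulVec (Pi.single j₀ D) := by
      rw [← e1, Matrix.mulVec_mulVec, Matrix.adjugate_mul, Matrix.smul_mulVec, Matrix.one_mulVec]
    have e3 := congrFun e2 i₀
    rw [Pi.smul_apply, smul_eq_mul, hi, ← hqdeg, hqm.coeff_natDegree, mul_one,
      Matrix.mulVec_single] at e3
    rw [e3]
    simp [Matrix.col]
  refine mul_left_cancel₀ hVdet ?_
  linear_combination D * h3 - P * η j₀ * h4

lemma calD_eq {δ : ℝ} {z : ℂ} {φ : Fin n → ℂ} (hφ : SimpleFib a δ (blaschke a z) φ) {j₀ : Fin n}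
    (hj : φ j₀ = z) (f : ℂ → ℂ) :
    calD a f z = ∏ k ∈ Finset.univ.erase j₀, (f z - f (φ k)) := by
  have h1 : (fiberMS a z).erase z = (Finset.univ.erase j₀).val.map φ := by
    rw [fiberMS_eq, hφ.roots_eq, ← Multiset.cons_erase (Finset.mem_univ_val j₀), Multiset.map_cons, hj,
      Multiset.erase_cons_head, Finset.erase_val]
  rw [calD, h1, Multiset.map_map]
  rfl

/-- Multiples of `Γ(g)` by bounded functions are bounded limits of `ℂ[B,g]`: by
`adjugate_identity` they are entries of a vector computed from `g` and functions `c ∘ B`,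
`c ∈ H^∞`, by ring operations. -/
lemma gamma_good (ha : ∀ j, a j ∈ uDisk) (h0 : ∃ j, a j = 0) {g Γg : ℂ → ℂ} (hg : MemHinf g)
    (hΓ : IsGamma a g Γg) {h : ℂ → ℂ} (hh : MemHinf h) :
    IsGood (blaschke a) g (fun z => Γg z * h z) := by
  have hmem : ∀ {w : ℂ}, w ∈ uDisk → ‖w‖ < 1 := fun {w} hw => by simpa [uDisk] using hw
  have hn : 0 < n := h0.choose.pos
  have hBd := blaschke_diff ha
  have hBm := blaschke_mapsTo ha h0
  have hB0 := blaschke_zero h0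
  obtain ⟨δ, hδ, β, hβ0, hβ1, hfib⟩ := exists_simpleFib ha h0
  obtain ⟨U, hU, hUh⟩ := hinf_decomp ha h0 hh
  have hgz : ∀ i : Fin n, MemHinf (fun z => g z * z ^ (i:ℕ)) := fun i => by
    obtain ⟨hgd, K, hK⟩ := hg
    refine ⟨hgd.mul (differentiable_pow _).differentiableOn, K, fun z hz => ?_⟩
    rw [norm_mul, norm_pow]
    exact (mul_le_of_le_one_right (norm_nonneg _)
      (pow_le_one₀ (norm_nonneg _) (hmem hz).le)).trans (hK z hz)
  choose G hG hGg using fun i => hinf_decomp ha h0 (hgz i)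
  set 𝒜 := goodAlg (blaschke a) g with h𝒜
  let g' : 𝒜 := ⟨g, good_self hg⟩
  let M' : Matrix (Fin n) (Fin n) 𝒜 := fun k i => ⟨_, good_of_comp (g := g) hBd hBm hB0 (hG i k)⟩
  let c' : Fin n → 𝒜 := fun k => ⟨_, good_of_comp (g := g) hBd hBm hB0 (hU k)⟩
  let i₀ : Fin n := ⟨n - 1, by omega⟩
  let S : 𝒜 := (Matrix.scalar (Fin n) g' - M').adjugate.mulVec c' i₀
  have hS : ∀ z, (S : ℂ → ℂ) z = (Matrix.scalar (Fin n) (g z) -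
      Matrix.of fun k i => G i k (blaschke a z)).adjugate.mulVec (fun k => U k (blaschke a z)) i₀ := by
    intro z
    let ev : 𝒜 →+* ℂ := (Pi.evalRingHom (fun _ : ℂ => ℂ) z).comp 𝒜.val.toRingHom
    have e1 : (S : ℂ → ℂ) z = ev S := rfl
    rw [e1, RingHom.map_mulVec]
    have e2 : (Matrix.scalar (Fin n) g' - M').adjugate.map ev
        = (Matrix.scalar (Fin n) (g z) - Matrix.of fun k i => G i k (blaschke a z)).adjugate := by
      have e3 := RingHom.map_adjugate ev (Matrix.scalar (Fin n) g' - M')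
      rw [RingHom.mapMatrix_apply, RingHom.mapMatrix_apply] at e3
      rw [e3]
      congr 1
      ext k i
      rw [Matrix.map_apply, Matrix.sub_apply, Matrix.sub_apply, map_sub]
      congr 1
      rw [Matrix.scalar_apply, Matrix.scalar_apply, Matrix.diagonal_apply, Matrix.diagonal_apply]
      split_ifs
      · rfl
      · exact map_zero ev
    rw [e2]
    rfl
  have hSgood : IsGood (blaschke a) g S := S.2
  have hloc : ∀ z ∈ uDisk, β < ‖blaschke a z‖ → (S : ℂ → ℂ) z = Γg z * h z := by
    intro z hz hb
    obtain ⟨φ, hφ⟩ := hfib _ hb (hmem (hBm hz))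
    have hroot := fibPol_root_self ha (hmem hz).le
    rw [hφ.eq_prod, eval_prod] at hroot
    obtain ⟨j₀, -, hj₀⟩ := Finset.prod_eq_zero_iff.mp hroot
    have hj : φ j₀ = z := by
      simp only [eval_sub, eval_X, eval_C] at hj₀
      exact (sub_eq_zero.mp hj₀).symm
    have hΓz := hΓ.2 z hz
    rw [calD_eq hφ hj, calD_eq hφ hj] at hΓz
    have hD := hφ.sep j₀
    have hid := adjugate_identity (inj_of_sep hδ hφ.sep) (fun j => g (φ j)) (fun j => h (φ j))
      (fun k => U k (blaschke a z)) (Matrix.of fun k i => G i k (blaschke a z))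
      (fun j i => by
        have := hGg i _ (hφ.mem j)
        rw [hφ.val j] at this
        exact this)
      (fun j => by
        have := hUh _ (hφ.mem j)
        rw [hφ.val j] at this
        exact this) j₀ i₀ rfl
    simp only [hj] at hid
    rw [← hS z] at hid
    rw [hj] at hD
    have hD0 : ∏ k ∈ Finset.univ.erase j₀, (z - φ k) ≠ 0 := norm_pos_iff.mp (hδ.trans_le hD)
    simp only [id] at hΓz
    refine mul_left_cancel₀ hD0 ?_
    rw [hid, ← hΓz]
    ring
  obtain ⟨z₀, hz₀, hb₀⟩ : ∃ z ∈ uDisk, β < ‖blaschke a z‖ := by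
    have hnorm : ‖(((β + 1) / 2 : ℝ) : ℂ)‖ = (β + 1) / 2 := by
      rw [Complex.norm_real, Real.norm_eq_abs, abs_of_nonneg (by positivity)]
    obtain ⟨φ, hφ⟩ := hfib (((β + 1) / 2 : ℝ) : ℂ) (by rw [hnorm]; linarith) (by rw [hnorm]; linarith)
    exact ⟨φ i₀, hφ.mem i₀, by rw [hφ.val, hnorm]; linarith⟩
  have hopen : IsOpen uDisk := isOpen_ball
  have hpre : IsPreconnected uDisk := (convex_ball (0:ℂ) 1).isPreconnected
  have hev : (S : ℂ → ℂ) =ᶠ[𝓝 z₀] fun z => Γg z * h z := by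
    have h1 : ∀ᶠ z in 𝓝 z₀, z ∈ uDisk := hopen.mem_nhds hz₀
    have h2 : ContinuousAt (fun z => ‖blaschke a z‖) z₀ :=
      (hBd.continuousOn.continuousAt (hopen.mem_nhds hz₀)).norm
    filter_upwards [h1, h2.eventually (lt_mem_nhds hb₀)] with z hz hb using hloc z hz hb
  have heq := (hSgood.1.analyticOnNhd hopen).eqOn_of_preconnected_of_eventuallyEq
    ((hΓ.1.mul hh.1).analyticOnNhd hopen) hpre hz₀ hev
  exact isGood_congr hSgood fun z hz => (heq hz).symm

end Fibres

/-- For `g ∈ H^∞` and every `p > 0`, the `H^p`-closure of `ℂ[B,g]`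
contains the `z`-invariant subspace `Γ(g)·H^p`. -/
theorem stmt8 {n : ℕ} (hn : 2 ≤ n) (a : Fin n → ℂ) (ha : ∀ j, a j ∈ uDisk)
    (ha0 : a ⟨0, by omega⟩ = 0)
    (g Γg : ℂ → ℂ) (hg : MemHinf g) (hΓg : IsGamma a g Γg)
    (p : ℝ) (hp : 0 < p)
    (h : ℂ → ℂ) (hh : MemHp p h) :
    (fun z => Γg z * h z) ∈ hpClosure p (algGen2 (blaschke a) g) := by
  have h0 : ∃ j, a j = 0 := ⟨_, ha0⟩
  have hone : MemHinf (fun _ => 1) := ⟨differentiableOn_const _, 1, fun z _ => by simp⟩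
  have hΓ : MemHinf Γg := by
    obtain ⟨-, K, hK, -⟩ := gamma_good ha h0 hg hΓg hone
    exact ⟨hΓg.1, K, fun z hz => by simpa using hK z hz⟩
  exact mem_closure_of_good hΓ hp (fun h' hh' => gamma_good ha h0 hg hΓg hh') hh
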